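/- arXiv:1410.7727 — 2 statements merged into one kernel-verified Lean document; each statement's English description precedes it below -/
import Mathlib

section
/- Let α ∈ Δ'. If C is a minimal set for σ contained in the symbolic β-shift B(I(α)) (i.e. C is a nonempty compact shift-invariant subset of B(I(α)) in which every point has dense forward orbit) and DF_MZ(C) ∩ DF_MZ(C_α) ≠ ∅, then C = C_α. -/
open Filter Topology MeasureTheory

/-- The sequence space `Σ⁺ = {0,1,2}^ℕ` (with the product topology). -/
abbrev Seq3 := ℕ → Fin 3

/-- The shift map `σ`. -/
def shift (s : Seq3) : Seq3 := fun n => s (n + 1)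

/-- The observable `κ(s) = e_{s₀}`. -/
noncomputable def kappa (s : Seq3) : Fin 3 → ℝ := fun i => if i = s 0 then 1 else 0

/-- The cocycle `κ_σ(s,r) = Σ_{i<r} κ(σⁱ s)`. -/
noncomputable def birk (s : Seq3) (r : ℕ) : Fin 3 → ℝ :=
  ∑ i ∈ Finset.range r, kappa (shift^[i] s)

/-- The Birkhoff digit frequency of `s` exists and equals `v`. -/
def hasFreq (s : Seq3) (v : Fin 3 → ℝ) : Prop :=
  Tendsto (fun r : ℕ => (r : ℝ)⁻¹ • birk s r) atTop (nhds v)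

/-- The lexicographic order on `Σ⁺`. -/
def lexLe (s t : Seq3) : Prop :=
  s = t ∨ ∃ n, (∀ i, i < n → s i = t i) ∧ s n < t n

/-- The set `Max` of maximal sequences. -/
def MaxSet : Set Seq3 := {w | w 0 = 2 ∧ ∀ r : ℕ, lexLe (shift^[r] w) w}

/-- The symbolic β-shift `B(w)`. -/
def BetaShift (w : Seq3) : Set Seq3 := {s | ∀ r : ℕ, lexLe (shift^[r] s) w}

/-- The digit frequency set `DF(w)`. -/
def DF (w : Seq3) : Set (Fin 3 → ℝ) := {v | ∃ s ∈ BetaShift w, hasFreq s v}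

/-- The Misiurewicz–Ziemian digit frequency set `DF_MZ(X)` of a subset `X ⊆ Σ⁺`. -/
def DFMZ (X : Set Seq3) : Set (Fin 3 → ℝ) :=
  {v | ∃ (s : ℕ → Seq3) (r : ℕ → ℕ), (∀ i, s i ∈ X) ∧ Tendsto r atTop atTop ∧
    Tendsto (fun i => (r i : ℝ)⁻¹ • birk (s i) (r i)) atTop (nhds v)}

/-- The standard 2-simplex `Δ ⊆ ℝ³`. -/
def Delta : Set (Fin 3 → ℝ) := {α | (∀ i, 0 ≤ α i) ∧ α 0 + α 1 + α 2 = 1}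

/-- `Δ' = {α ∈ Δ : α₂ > 0}`. -/
def Delta' : Set (Fin 3 → ℝ) := {α | α ∈ Delta ∧ 0 < α 2}

/-- `I` is the infimax sequence of `α`: the infimum, in the lexicographic order, of the
(nonempty) set of maximal sequences with digit frequency `α`; it belongs to `Max`. -/
def IsInfimax (α : Fin 3 → ℝ) (I : Seq3) : Prop :=
  {w | w ∈ MaxSet ∧ hasFreq w α}.Nonempty ∧ I ∈ MaxSet ∧
    (∀ w, w ∈ MaxSet ∧ hasFreq w α → lexLe I w) ∧
    (∀ b : Seq3, (∀ w, w ∈ MaxSet ∧ hasFreq w α → lexLe b w) → lexLe b I)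

/-- The closure of the forward `σ`-orbit of `s` (e.g. `C_α` is `orbitClosure I(α)`). -/
def orbitClosure (s : Seq3) : Set Seq3 := closure {t | ∃ r : ℕ, shift^[r] s = t}

/-- A vector in `ℝ³` is rational if all its coordinates are. -/
def IsRat (v : Fin 3 → ℝ) : Prop := ∀ i, ∃ q : ℚ, v i = (q : ℝ)

/-- A minimal set of a continuous map: a nonempty compact invariant set in which every
point has dense forward orbit. -/
def IsMinimalSet {X : Type*} [TopologicalSpace X] (f : X → X) (C : Set X) : Prop :=
  C.Nonempty ∧ IsCompact C ∧ Set.MapsTo f C C ∧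
    ∀ x ∈ C, C ⊆ closure {y | ∃ n : ℕ, f^[n] x = y}

abbrev W3 := List (Fin 3)

set_option linter.unusedSimpArgs false

lemma cle {a b : Fin 3} {l m : W3} : a :: l ≤ b :: m ↔ a < b ∨ a = b ∧ l ≤ m := by
  rw [le_iff_lt_or_eq, List.cons_lt_cons_iff, le_iff_lt_or_eq, List.cons_eq_cons]; tauto

lemma clt {a b : Fin 3} {l m : W3} : a :: l < b :: m ↔ a < b ∨ a = b ∧ l < m :=
  List.cons_lt_cons_iff

lemma alt (k : W3) {l m : W3} : k ++ l < k ++ m ↔ l < m := by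
  induction k with
  | nil => simp
  | cons a k ih => simp [ih]

lemma ale (k : W3) {l m : W3} : k ++ l ≤ k ++ m ↔ l ≤ m := by
  rw [← not_lt, alt, not_lt]

lemma nil_le' (l : W3) : [] ≤ l := by
  cases l with
  | nil => exact le_rfl
  | cons a l => exact le_of_lt (List.nil_lt_cons _ _)

lemma le_append' (l m : W3) : l ≤ l ++ m := by
  have := (ale l (l := []) (m := m)).2 (nil_le' m)
  simpa using this

lemma fin3 (a : Fin 3) : a = 0 ∨ a = 1 ∨ a = 2 := by revert a; decide

def Z (n : ℕ) : W3 := List.replicate n 0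

lemma Z_succ (n : ℕ) : Z (n+1) = 0 :: Z n := rfl

lemma Z_add (a b : ℕ) : Z (a + b) = Z a ++ Z b := List.replicate_add a b 0

def La (n : ℕ) : Fin 3 → W3 := ![[1], 2 :: Z (n+1), 2 :: Z n]

def Lam (n : ℕ) (y : W3) : W3 := y.flatMap (La n)

@[simp] lemma Lam_nil (n : ℕ) : Lam n [] = [] := rfl
lemma Lam_cons (n : ℕ) (a : Fin 3) (y : W3) : Lam n (a :: y) = La n a ++ Lam n y := rfl
lemma Lam_append (n : ℕ) (x y : W3) : Lam n (x ++ y) = Lam n x ++ Lam n y := by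
  simp [Lam]
@[simp] lemma La0 (n : ℕ) : La n 0 = [1] := rfl
@[simp] lemma La1 (n : ℕ) : La n 1 = 2 :: Z (n+1) := rfl
@[simp] lemma La2 (n : ℕ) : La n 2 = 2 :: Z n := rfl

lemma La_head (n : ℕ) (a : Fin 3) : ∃ c t, 0 < c ∧ La n a = c :: t := by
  fin_cases a
  · exact ⟨1, [], by decide, rfl⟩
  · exact ⟨2, _, by decide, rfl⟩
  · exact ⟨2, _, by decide, rfl⟩

lemma Lam_head (n : ℕ) (y : W3) (hy : y ≠ []) : ∃ c t, 0 < c ∧ Lam n y = c :: t := by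
  cases y with
  | nil => exact absurd rfl hy
  | cons a y =>
    obtain ⟨c, t, hc, h⟩ := La_head n a
    exact ⟨c, t ++ Lam n y, hc, by rw [Lam_cons, h]; rfl⟩

lemma Z_lt (n : ℕ) (c : Fin 3) (t : W3) (hc : 0 < c) : Z n < c :: t := by
  cases n with
  | zero => exact List.nil_lt_cons _ _
  | succ n => rw [Z_succ, clt]; exact Or.inl hc

lemma keyK (n : ℕ) (a : Fin 3) (P d : W3) (h : P ≤ d) :
    Lam n P ++ Z n < Lam n (d ++ [a]) := by
  induction P generalizing d with
  | nil =>
    obtain ⟨c, t, hc, h⟩ := Lam_head n (d ++ [a]) (by simp)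
    rw [h]; simpa using Z_lt n c t hc
  | cons b P ih =>
    cases d with
    | nil => exact absurd h (not_le.2 (List.nil_lt_cons _ _))
    | cons b' d =>
      rw [cle] at h
      rw [List.cons_append, Lam_cons, Lam_cons, List.append_assoc]
      rcases h with h | ⟨rfl, h⟩
      · obtain ⟨c, t, hc, ht⟩ := Lam_head n (d ++ [a]) (by simp)
        have : (b = 0 ∧ b' = 1) ∨ (b = 0 ∧ b' = 2) ∨ (b = 1 ∧ b' = 2) := by
          revert h; revert b b'; decide
        rcases this with ⟨rfl, rfl⟩ | ⟨rfl, rfl⟩ | ⟨rfl, rfl⟩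
        · simp [clt]
        · simp [clt]
        · rw [ht, La1, La2, Z_add]
          simp only [List.cons_append, List.append_assoc, clt, alt]
          right; refine ⟨trivial, ?_⟩
          change 0 :: _ < _
          rw [clt]; exact Or.inl hc
      · rw [alt]; exact ih d h

lemma Z_le (n : ℕ) (z : W3) (h : n ≤ z.length) : Z n ≤ z := by
  induction n generalizing z with
  | zero => exact nil_le' z
  | succ n ih =>
    cases z with
    | nil => simp at h
    | cons a z =>
      rw [Z_succ, cle]
      by_cases ha : a = 0
      · right; exact ⟨ha.symm, ih z (by simpa using h)⟩
      · left; exact Fin.pos_of_ne_zero ha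

lemma lt_pad (n : ℕ) (x y : W3) (h : x < y) : x ++ Z n ≤ y ++ Z n := by
  induction x generalizing y with
  | nil => exact Z_le n _ (by simp [Z])
  | cons a x ih =>
    cases y with
    | nil => exact absurd h (by simp)
    | cons b y =>
      rw [clt] at h
      simp only [List.cons_append, cle]
      rcases h with h | ⟨h, h'⟩
      · exact Or.inl h
      · exact Or.inr ⟨h, ih y h'⟩

lemma Z_move (q : ℕ) (c : Fin 3) (hc : 0 < c) (t : W3) : Z q ++ c :: t ≤ c :: (Z q ++ t) := by
  cases q with
  | zero => exact le_rfl
  | succ q => rw [Z_succ, List.cons_append, cle]; exact Or.inl hc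

def wt (l : Fin 3 → ℝ) (x : W3) : ℝ := (x.map l).sum

@[simp] lemma wt_nil (l : Fin 3 → ℝ) : wt l [] = 0 := rfl
@[simp] lemma wt_cons (l : Fin 3 → ℝ) (a : Fin 3) (x : W3) : wt l (a :: x) = l a + wt l x := by
  simp [wt]
@[simp] lemma wt_append (l : Fin 3 → ℝ) (x y : W3) : wt l (x ++ y) = wt l x + wt l y := by
  simp [wt]
@[simp] lemma wt_Z (l : Fin 3 → ℝ) (n : ℕ) : wt l (Z n) = n * l 0 := by
  simp [wt, Z]

lemma main_comb (n : ℕ) (p : W3) (x : W3) (hx : ∀ y, y <:+ x → y < Lam n (2 :: p)) :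
    ∃ (q : ℕ) (u : W3), (∀ l, wt l x + n * l 0 = q * l 0 + wt l (Lam n u)) ∧
      Z q ++ Lam n u ≤ x ++ Z n ∧ (u = [] → n ≤ q) ∧
      (∀ y a, y ++ [a] <:+ u → y < 2 :: p) := by
  induction x with
  | nil =>
    refine ⟨n, [], by simp, by simp, fun _ => le_rfl, ?_⟩
    intro y a h
    simp at h
  | cons b x ih =>
    obtain ⟨q, u, h1, h2, h3, h4⟩ := ih (fun y hy => hx y (hy.trans (List.suffix_cons _ _)))
    have hsm : ∀ c : Fin 3, c < 2 → ∀ y a, y ++ [a] <:+ c :: u → y < 2 :: p := by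
      intro c hc y a h
      rw [List.suffix_cons_iff] at h
      rcases h with h | h
      · cases y with
        | nil => exact List.nil_lt_cons _ _
        | cons d y =>
          simp at h
          rw [clt, h.1]; exact Or.inl hc
      · exact h4 y a h
    have hb : b = 0 ∨ b = 1 ∨ b = 2 := fin3 b
    rcases hb with rfl | rfl | rfl
    · refine ⟨q + 1, u, ?_, ?_, fun h => (h3 h).trans (Nat.le_succ q), h4⟩
      · intro l; have := h1 l; push_cast; simp; linarith
      · rw [Z_succ, List.cons_append, List.cons_append, cle]; exact Or.inr ⟨rfl, h2⟩
    · refine ⟨q, 0 :: u, ?_, ?_, by simp, hsm 0 (by decide)⟩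
      · intro l; have := h1 l; simp [Lam_cons]; linarith
      · rw [Lam_cons]
        refine (Z_move q 1 (by decide) (Lam n u)).trans ?_
        rw [List.cons_append, cle]; exact Or.inr ⟨rfl, h2⟩
    · have h5 : (2 :: x) ++ Z n ≤ Lam n (2 :: p) ++ Z n := lt_pad n _ _ (hx _ List.suffix_rfl)
      have h6 : 2 :: (Z q ++ Lam n u) ≤ (2 :: x) ++ Z n := by
        rw [List.cons_append, cle]; exact Or.inr ⟨rfl, h2⟩
      have hqn : n ≤ q := by
        by_contra hq
        push Not at hq
        have hu : u ≠ [] := fun h => absurd (h3 h) (not_le.2 hq)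
        obtain ⟨c, t, hc, ht⟩ := Lam_head n u hu
        have h7 := h6.trans h5
        obtain ⟨m, rfl⟩ : ∃ m, n = q + (m + 1) := ⟨n - q - 1, by omega⟩
        rw [Lam_cons, La2, List.cons_append, List.cons_append, cle] at h7
        rcases h7 with h7 | ⟨-, h7⟩
        · exact absurd h7 (lt_irrefl _)
        · rw [ht, Z_add q, List.append_assoc, List.append_assoc, ale, Z_succ, List.cons_append,
            cle] at h7
          rcases h7 with h7 | h7
          · exact absurd h7 (not_lt.2 (Fin.zero_le _))
          · exact absurd h7.1 hc.ne'
      rcases hqn.eq_or_lt with rfl | hq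
      · have h8 : Lam n (2 :: u) ≤ (2 :: x) ++ Z n := by
          rw [Lam_cons]; simpa using h6
        refine ⟨0, 2 :: u, ?_, ?_, by simp, ?_⟩
        · intro l; have := h1 l; simp [Lam_cons]; linarith
        · simpa [Z] using h8
        · intro y a h
          rw [List.suffix_cons_iff] at h
          rcases h with h | h
          · by_contra hy
            have := keyK n a _ _ (not_lt.1 hy)
            rw [h] at this
            exact absurd (h8.trans h5) (not_le.2 this)
          · exact h4 y a h
      · obtain ⟨m, rfl⟩ : ∃ m, q = m + (n + 1) := ⟨q - n - 1, by omega⟩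
        refine ⟨m, 1 :: u, ?_, ?_, by simp, hsm 1 (by decide)⟩
        · intro l; have := h1 l; push_cast at this; simp [Lam_cons]; linarith
        · refine le_trans ?_ h6
          rw [Lam_cons, La1, Z_add m, List.append_assoc]
          exact Z_move m 2 (by decide) _

def pull (n : ℕ) (l : Fin 3 → ℝ) : Fin 3 → ℝ := ![l 1 - l 2, l 0, -n * l 1 + (n+1) * l 2]

def inv3 (n : ℕ) (a : Fin 3 → ℝ) : Fin 3 → ℝ := ![a 1, a 0 - n * a 2, (n+1) * a 2 - a 0]

def dot (l a : Fin 3 → ℝ) : ℝ := l 0 * a 0 + l 1 * a 1 + l 2 * a 2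

lemma dot_pull (n : ℕ) (l a : Fin 3 → ℝ) : dot (pull n l) a = dot l (inv3 n a) := by
  simp [dot, pull, inv3]; ring

lemma wt_pull (n : ℕ) (l : Fin 3 → ℝ) (x : W3) : wt (pull n l) (Lam n x) = wt l x := by
  induction x with
  | nil => simp
  | cons a x ih =>
    rw [Lam_cons, wt_append, ih, wt_cons]
    congr 1
    fin_cases a
    · simp [pull]
    · simp [pull]; ring
    · simp [pull]; ring

def Sg (l : Fin 3 → ℝ) : Prop := l 0 ≤ 0 ∧ l 1 ≤ 0 ∧ 0 ≤ l 2

lemma Sg_pull (n : ℕ) (l : Fin 3 → ℝ) (h : Sg l) : Sg (pull n l) := by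
  obtain ⟨h0, h1, h2⟩ := h
  refine ⟨?_, ?_, ?_⟩ <;> simp [pull]
  · linarith
  · exact h0
  · have : (0:ℝ) ≤ n := Nat.cast_nonneg n
    nlinarith

def Good (P : W3) (l : Fin 3 → ℝ) : Prop :=
  ∃ c, ∀ x : W3, (∀ y, y <:+ x → y < P) → wt l x ≤ c

lemma Good_step (n : ℕ) (p : W3) (l : Fin 3 → ℝ) (hl : Sg l) (h : Good (2 :: p) l) :
    Good (Lam n (2 :: p)) (pull n l) := by
  obtain ⟨c, hc⟩ := h
  refine ⟨|c| + |l 0| + |l 1| + |l 2| - n * pull n l 0, fun x hx => ?_⟩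
  obtain ⟨q, u, h1, -, -, h4⟩ := main_comb n p x hx
  have e := h1 (pull n l)
  rw [wt_pull] at e
  have hq : (q:ℝ) * pull n l 0 ≤ 0 :=
    mul_nonpos_of_nonneg_of_nonpos (Nat.cast_nonneg q) (Sg_pull n l hl).1
  have : wt l u ≤ |c| + |l 0| + |l 1| + |l 2| := by
    rcases List.eq_nil_or_concat' u with rfl | ⟨d, a, rfl⟩
    · simp; positivity
    · have hd := hc d (by
        intro y hy
        obtain ⟨t, rfl⟩ := hy
        exact h4 y a ⟨t, by simp⟩)
      have ha : l a ≤ |l 0| + |l 1| + |l 2| := by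
        have h0 := abs_nonneg (l 0)
        have h1 := abs_nonneg (l 1)
        have h2 := abs_nonneg (l 2)
        have := le_abs_self (l a)
        have hb : a = 0 ∨ a = 1 ∨ a = 2 := fin3 a
        rcases hb with rfl | rfl | rfl <;> linarith
      have := le_abs_self c
      simp; linarith
  linarith

def Tw (k : ℕ) : W3 := List.replicate k 2
def base (k : ℕ) : Fin 3 → ℝ := ![-k, -k, 1]

lemma base0 (k : ℕ) : base k 0 = -k := rfl
lemma base1 (k : ℕ) : base k 1 = -k := rfl
lemma base2 (k : ℕ) : base k 2 = 1 := rfl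

lemma Good_base (k : ℕ) : Good (Tw (k+1)) (base k) := by
  refine ⟨k, fun x hx => ?_⟩
  have : ∃ (j : ℕ) (x' : W3), x = Tw j ++ x' ∧ wt (base k) x ≤ j := by
    induction x with
    | nil => exact ⟨0, [], rfl, by simp⟩
    | cons b x ih =>
      obtain ⟨j, x', h, hj⟩ := ih (fun y hy => hx y (hy.trans (List.suffix_cons _ _)))
      have hjk : j ≤ k := by
        by_contra hjk
        push Not at hjk
        have := hx x (List.suffix_cons _ _)
        obtain ⟨m, rfl⟩ : ∃ m, j = (k + 1) + m := ⟨j - (k+1), by omega⟩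
        rw [h, Tw, List.replicate_add, List.append_assoc] at this
        exact absurd this (not_lt.2 (le_append' _ _))
      have hjk' : (j:ℝ) ≤ k := by exact_mod_cast hjk
      have hb : b = 0 ∨ b = 1 ∨ b = 2 := fin3 b
      rcases hb with rfl | rfl | rfl
      · exact ⟨0, 0 :: x, rfl, by simp [base0, base1, base2]; linarith⟩
      · exact ⟨0, 1 :: x, rfl, by simp [base0, base1, base2]; linarith⟩
      · exact ⟨j+1, x', by rw [h]; rfl, by simp [base0, base1, base2]; linarith⟩
  obtain ⟨j, x', h, hj⟩ := this
  have hjk : j ≤ k := by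
    by_contra hjk
    push Not at hjk
    have := hx x List.suffix_rfl
    obtain ⟨m, rfl⟩ : ∃ m, j = (k + 1) + m := ⟨j - (k+1), by omega⟩
    rw [h, Tw, List.replicate_add, List.append_assoc] at this
    exact absurd this (not_lt.2 (le_append' _ _))
  have hjk' : (j:ℝ) ≤ k := by exact_mod_cast hjk
  linarith

def SubN (n : ℕ → ℕ) : ℕ → W3 → W3
  | 0, y => y
  | R+1, y => SubN n R (Lam (n R) y)

def pullN (n : ℕ → ℕ) : ℕ → (Fin 3 → ℝ) → (Fin 3 → ℝ)
  | 0, l => l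
  | R+1, l => pullN n R (pull (n R) l)

lemma Good_N (n : ℕ → ℕ) (R : ℕ) (p : W3) (l : Fin 3 → ℝ) (hl : Sg l) (h : Good (2 :: p) l) :
    Good (SubN n R (2 :: p)) (pullN n R l) := by
  induction R generalizing p l with
  | zero => exact h
  | succ R ih =>
    have := Good_step (n R) p l hl h
    exact ih _ _ (Sg_pull _ _ hl) this

lemma dot_pullN (n : ℕ → ℕ) (a : ℕ → Fin 3 → ℝ) (ha : ∀ j, a (j+1) = inv3 (n j) (a j))
    (R : ℕ) (l : Fin 3 → ℝ) : dot (pullN n R l) (a 0) = dot l (a R) := by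
  induction R generalizing l with
  | zero => rfl
  | succ R ih => rw [pullN, ih, dot_pull, ha]


def pre : ℕ → Seq3 → W3
  | 0, _ => []
  | N+1, s => s 0 :: pre N (shift s)

@[simp] lemma pre_length (N : ℕ) (s : Seq3) : (pre N s).length = N := by
  induction N generalizing s with
  | zero => rfl
  | succ N ih => simp [pre, ih]

lemma pre_add (a b : ℕ) (s : Seq3) : pre (a + b) s = pre a s ++ pre b (shift^[a] s) := by
  induction a generalizing s with
  | zero => simp [pre]
  | succ a ih => rw [Nat.succ_add]; simp [pre, ih]

lemma iter_shift (m i : ℕ) (s : Seq3) : shift^[m] s i = s (m + i) := by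
  induction m generalizing s with
  | zero => simp
  | succ m ih => rw [Function.iterate_succ_apply, ih]; simp [shift]; congr 1; omega

lemma pre_succ' (N : ℕ) (s : Seq3) : pre (N+1) s = pre N s ++ [s N] := by
  rw [pre_add]; simp [pre, iter_shift]

lemma pre_get (N : ℕ) (s : Seq3) (j : ℕ) (h : j < (pre N s).length) : (pre N s)[j] = s j := by
  induction N generalizing s j with
  | zero => simp at h
  | succ N ih =>
    cases j with
    | zero => rfl
    | succ j => simp [pre, ih, shift]

lemma pre_eq_iff (N : ℕ) (s t : Seq3) : pre N s = pre N t ↔ ∀ i < N, s i = t i := by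
  constructor
  · intro h i hi
    rw [← pre_get N s i (by simpa), ← pre_get N t i (by simpa)]
    simp [h]
  · intro h
    apply List.ext_getElem (by simp)
    intro i h1 h2
    rw [pre_get, pre_get]; exact h i (by simpa using h1)

lemma pre_prefix {M N : ℕ} (h : M ≤ N) (s : Seq3) : pre M s <+: pre N s := by
  obtain ⟨k, rfl⟩ := Nat.exists_eq_add_of_le h
  rw [pre_add]; exact List.prefix_append _ _

lemma prefix_pre {N : ℕ} {s : Seq3} {y : W3} (h : y <+: pre N s) : y = pre y.length s := by
  have h1 : y.length ≤ N := by simpa using h.length_le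
  have h2 := pre_prefix h1 s
  exact (List.prefix_of_prefix_length_le h h2 (by simp)).eq_of_length (by simp)

lemma lexLe_head {s t : Seq3} (h : s 0 < t 0) : lexLe s t :=
  Or.inr ⟨0, by simp, h⟩

lemma lexLe_cons {s t : Seq3} (h : s 0 = t 0) (h' : lexLe (shift s) (shift t)) : lexLe s t := by
  rcases h' with h' | ⟨n, h1, h2⟩
  · left; funext i
    cases i with
    | zero => exact h
    | succ i => exact congrFun h' i
  · right; refine ⟨n+1, ?_, h2⟩
    intro i hi
    cases i with
    | zero => exact h
    | succ i => exact h1 i (by omega)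

lemma lexLe_cases {s t : Seq3} (h : lexLe s t) :
    s 0 < t 0 ∨ s 0 = t 0 ∧ lexLe (shift s) (shift t) := by
  rcases h with rfl | ⟨n, h1, h2⟩
  · right; exact ⟨rfl, Or.inl rfl⟩
  · cases n with
    | zero => exact Or.inl h2
    | succ n => exact Or.inr ⟨h1 0 (by omega), Or.inr ⟨n, fun i hi => h1 (i+1) (by omega), h2⟩⟩

lemma lexLe_pre {s t : Seq3} (h : lexLe s t) (N : ℕ) : pre N s ≤ pre N t := by
  induction N generalizing s t with
  | zero => exact le_rfl
  | succ N ih =>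
    rw [pre, pre, cle]
    rcases lexLe_cases h with h | ⟨h, h'⟩
    · exact Or.inl h
    · exact Or.inr ⟨h, ih h'⟩

lemma lexLe_of_pre {s t : Seq3} (k : ℕ) (h : pre k s = pre k t)
    (h' : lexLe (shift^[k] s) (shift^[k] t)) : lexLe s t := by
  induction k generalizing s t with
  | zero => exact h'
  | succ k ih =>
    simp only [pre, List.cons.injEq] at h
    exact lexLe_cons h.1 (ih h.2 h')

def pad (P : W3) : Seq3 := fun i => P.getD i 0

lemma pad_pre (P : W3) : pre P.length (pad P) = P := by
  apply List.ext_getElem (by simp)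
  intro i h1 h2
  rw [pre_get, pad, List.getD_eq_getElem _ _ h2]

lemma pad_le (P : W3) (w : Seq3) (h : P ≤ pre P.length w) : lexLe (pad P) w := by
  induction P generalizing w with
  | nil =>
    by_cases hw : ∃ i, w i ≠ 0
    · classical
      right
      refine ⟨Nat.find hw, fun i hi => ?_, ?_⟩
      · have := Nat.find_min hw hi
        push Not at this
        simp [pad, this]
      · have := Nat.find_spec hw
        simp only [pad, List.getD_nil]
        exact Fin.pos_of_ne_zero this
    · push Not at hw
      left; funext i; simp [pad, hw i]
  | cons b P ih =>
    rw [List.length_cons, pre, cle] at h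
    rcases h with h | ⟨h, h'⟩
    · exact lexLe_head h
    · exact lexLe_cons h (ih _ h')

/- infinite substitution -/
def Rl (n : ℕ) (u t : Seq3) : Prop :=
  ∀ N, pre (Lam n (pre N u)).length t = Lam n (pre N u)

lemma La_pos (n : ℕ) (a : Fin 3) : 1 ≤ (La n a).length := by
  obtain ⟨c, t, -, h⟩ := La_head n a
  rw [h]; simp

lemma La_le (n : ℕ) (a : Fin 3) : (La n a).length ≤ n + 2 := by
  rcases fin3 a with rfl | rfl | rfl <;> simp [Z]

lemma Lam_len (n : ℕ) (y : W3) : y.length ≤ (Lam n y).length := by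
  induction y with
  | nil => simp
  | cons a y ih => rw [Lam_cons]; have := La_pos n a; simp; omega

lemma Lam_prefix (n : ℕ) {x y : W3} (h : x <+: y) : Lam n x <+: Lam n y := by
  obtain ⟨z, rfl⟩ := h
  rw [Lam_append]; exact List.prefix_append _ _

lemma Rl_exists (n : ℕ) (u : Seq3) : ∃ t, Rl n u t := by
  refine ⟨fun j => (Lam n (pre (j+1) u)).getD j 0, fun N => ?_⟩
  apply List.ext_getElem (by simp)
  intro i h1 h2
  have h3 : i < (Lam n (pre (i+1) u)).length := by
    have := Lam_len n (pre (i+1) u)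
    simp at this; omega
  rw [pre_get, List.getD_eq_getElem _ _ h3]
  rcases le_total N (i+1) with h | h
  · exact ((Lam_prefix n (pre_prefix h u)).getElem h2).symm
  · exact ((Lam_prefix n (pre_prefix h u)).getElem h3)

lemma Rl_unique {n : ℕ} {u t t' : Seq3} (h : Rl n u t) (h' : Rl n u t') : t' = t := by
  funext i
  have e : pre (Lam n (pre (i+1) u)).length t' = pre (Lam n (pre (i+1) u)).length t := by
    rw [h (i+1), h' (i+1)]
  have := Lam_len n (pre (i+1) u)
  simp at this
  exact (pre_eq_iff _ _ _).1 e i (by omega)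

lemma Rl_head {n : ℕ} {u t : Seq3} (h : Rl n u t) : pre (La n (u 0)).length t = La n (u 0) := by
  have := h 1
  simpa [pre, Lam] using this

lemma Rl_shift {n : ℕ} {u t : Seq3} (h : Rl n u t) :
    Rl n (shift u) (shift^[(La n (u 0)).length] t) := by
  intro N
  have := h (N+1)
  rw [pre, Lam_cons, List.length_append, pre_add] at this
  exact (List.append_inj this (by simp)).2

lemma Rl_head_pos {n : ℕ} {u t : Seq3} (h : Rl n u t) : 0 < t 0 := by
  have := Rl_head h
  obtain ⟨c, r, hc, e⟩ := La_head n (u 0)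
  rw [e] at this
  simp [pre] at this
  rw [this.1]; exact hc

lemma Rl_order {n : ℕ} (N : ℕ) {u u' t t' : Seq3} (h : Rl n u t) (h' : Rl n u' t')
    (h1 : ∀ i < N, u' i = u i) (h2 : u' N < u N) : lexLe t' t := by
  induction N generalizing u u' t t' with
  | zero =>
    have a := Rl_head h
    have a' := Rl_head h'
    have b := Rl_head_pos (Rl_shift h)
    have : (u' 0 = 0 ∧ u 0 = 1) ∨ (u' 0 = 0 ∧ u 0 = 2) ∨ (u' 0 = 1 ∧ u 0 = 2) := by
      revert h2; generalize u' 0 = x; generalize u 0 = y; revert x y; decide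
    rcases this with ⟨e, f⟩ | ⟨e, f⟩ | ⟨e, f⟩ <;> rw [e] at a' <;> rw [f] at a b
    · simp [pre] at a a'
      apply lexLe_head; rw [a.1, a']; decide
    · simp [pre] at a a'
      apply lexLe_head; rw [a.1, a']; decide
    · have e1 : (La n 2).length = n + 1 := by simp [Z]
      have e2 : (La n 1).length = (n + 1) + 1 := by simp [Z]
      rw [e1] at a b
      rw [e2, pre_add] at a'
      have e3 : La n 1 = (2 :: Z n) ++ [0] := by
        rw [La1, Z_add]; rfl
      rw [e3] at a'
      have a2 := List.append_inj a' (by simp [Z])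
      apply lexLe_of_pre (n+1) (by rw [a, a2.1]; rfl)
      apply lexLe_head
      have a3 := a2.2
      simp only [pre, List.cons.injEq] at a3
      rw [a3.1]; exact b
  | succ N ih =>
    have e := h1 0 (by omega)
    have a := Rl_head h
    have a' := Rl_head h'
    have b := Rl_shift h
    have b' := Rl_shift h'
    rw [e] at a' b'
    apply lexLe_of_pre _ (a'.trans a.symm)
    exact ih b b' (fun i hi => h1 (i+1) (by omega)) h2

lemma Rl_two {n : ℕ} (j : ℕ) {u t : Seq3} (h : Rl n u t) (hj : t j = 2) :
    ∃ m, Rl n (shift^[m] u) (shift^[j] t) := by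
  induction j using Nat.strong_induction_on generalizing u t with
  | _ j ih =>
    by_cases hjk : j < (La n (u 0)).length
    · have e : t j = (La n (u 0))[j] := by
        rw [← pre_get (La n (u 0)).length t j (by simpa using hjk)]
        simp [Rl_head h]
      have : j = 0 := by
        by_contra hne
        obtain ⟨i, rfl⟩ := Nat.exists_eq_succ_of_ne_zero hne
        rw [hj] at e
        rcases fin3 (u 0) with f | f | f
        · simp [f] at hjk
        · simp [f, Z] at e
        · simp [f, Z] at e
      subst this
      exact ⟨0, h⟩
    · push Not at hjk
      obtain ⟨i, rfl⟩ := Nat.exists_eq_add_of_le hjk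
      have hp := La_pos n (u 0)
      obtain ⟨m, hm⟩ := ih i (by omega) (Rl_shift h) (by rw [iter_shift]; exact hj)
      refine ⟨m+1, ?_⟩
      rw [Function.iterate_succ_apply]
      rw [← Function.iterate_add_apply, Nat.add_comm] at hm
      exact hm

lemma Rl_max {n : ℕ} {u t : Seq3} (h : Rl n u t) (hu : u ∈ MaxSet) : t ∈ MaxSet := by
  have ht0 : t 0 = 2 := by
    have := Rl_head h
    rw [hu.1] at this
    simp [pre] at this
    exact this.1
  refine ⟨ht0, fun j => ?_⟩
  by_cases hj : t j = 2
  · obtain ⟨m, hm⟩ := Rl_two j h hj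
    rcases hu.2 m with e | ⟨N, h1, h2⟩
    · rw [e] at hm
      exact Or.inl (Rl_unique h hm)
    · exact Rl_order N h hm h1 h2
  · apply lexLe_head
    rw [iter_shift, ht0, Nat.add_zero]
    revert hj; generalize t j = x; revert x; decide

def bd (l : Fin 3 → ℝ) : ℝ := |l 0| + |l 1| + |l 2|

lemma bd_nonneg (l : Fin 3 → ℝ) : 0 ≤ bd l := by unfold bd; positivity

lemma abs_le_bd (l : Fin 3 → ℝ) (a : Fin 3) : |l a| ≤ bd l := by
  have h0 := abs_nonneg (l 0)
  have h1 := abs_nonneg (l 1)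
  have h2 := abs_nonneg (l 2)
  unfold bd
  rcases fin3 a with rfl | rfl | rfl <;> linarith

lemma wt_bd (l : Fin 3 → ℝ) (x : W3) : |wt l x| ≤ x.length * bd l := by
  induction x with
  | nil => simp
  | cons a x ih =>
    rw [wt_cons]
    refine (abs_add_le _ _).trans ?_
    have := abs_le_bd l a
    push_cast [List.length_cons]; linarith

lemma wt_bd' (l : Fin 3 → ℝ) (x : W3) (m : ℕ) (h : x.length ≤ m) : |wt l x| ≤ m * bd l :=
  (wt_bd l x).trans (mul_le_mul_of_nonneg_right (by exact_mod_cast h) (bd_nonneg l))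

lemma prefix_Lam (n : ℕ) (y x : W3) (h : x <+: Lam n y) :
    ∃ y' s, y' <+: y ∧ x = Lam n y' ++ s ∧ s.length ≤ n + 2 := by
  induction y generalizing x with
  | nil =>
    refine ⟨[], x, List.nil_prefix, rfl, ?_⟩
    simp at h; simp [h]
  | cons a y ih =>
    rw [Lam_cons] at h
    have h' : x <+: La n a ∨ ∃ t, x = La n a ++ t ∧ t <+: Lam n y := by
      rcases le_total x.length (La n a).length with hl | hl
      · exact Or.inl (List.prefix_of_prefix_length_le h (List.prefix_append _ _) hl)
      · obtain ⟨t, rfl⟩ := List.prefix_of_prefix_length_le (List.prefix_append _ _) h hl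
        exact Or.inr ⟨t, rfl, (List.prefix_append_right_inj _).1 h⟩
    rcases h' with h | ⟨t, rfl, ht⟩
    · exact ⟨[], x, List.nil_prefix, rfl, h.length_le.trans (La_le n a)⟩
    · obtain ⟨y', s, h1, rfl, h3⟩ := ih t ht
      exact ⟨a :: y', s, by simpa using h1, by rw [Lam_cons, List.append_assoc], h3⟩

lemma infix_Lam (n : ℕ) (y x : W3) (h : x <:+: Lam n y) :
    ∃ y' p s, y' <:+: y ∧ x = p ++ Lam n y' ++ s ∧ p.length ≤ n + 2 ∧ s.length ≤ n + 2 := by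
  induction y with
  | nil =>
    have : x = [] := by simpa using h
    exact ⟨[], [], [], List.nil_infix, by simp [this], by simp, by simp⟩
  | cons a y ih =>
    rw [Lam_cons, List.infix_append_iff] at h
    have hs : ∀ z : W3, z <:+: La n a → z.length ≤ n + 2 :=
      fun z hz => hz.length_le.trans (La_le n a)
    rcases h with h | h | ⟨t1, t2, rfl, h1, h2⟩
    · exact ⟨[], x, [], List.nil_infix, by simp, hs _ h, by simp⟩
    · obtain ⟨y', p, s, h1, h2⟩ := ih h
      exact ⟨y', p, s, h1.trans (List.suffix_cons _ _).isInfix, h2⟩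
    · obtain ⟨y', s, h3, rfl, h4⟩ := prefix_Lam n y t2 h2
      exact ⟨y', t1, s, h3.isInfix.trans (List.suffix_cons _ _).isInfix, by simp,
        hs _ h1.isInfix, h4⟩

def BD (u : Seq3) (a : Fin 3 → ℝ) : Prop :=
  ∀ l, dot l a = 0 → ∃ D, ∀ N, |wt l (pre N u)| ≤ D

def push (n : ℕ) (l : Fin 3 → ℝ) : Fin 3 → ℝ := ![l 1, l 2 + (n+1) * l 0, l 2 + n * l 0]

lemma pull_push (n : ℕ) (l : Fin 3 → ℝ) : pull n (push n l) = l := by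
  funext i
  rcases fin3 i with rfl | rfl | rfl <;> simp [pull, push] <;> ring

lemma Rl_BD {n : ℕ} {u t : Seq3} (h : Rl n u t) {a : Fin 3 → ℝ} (hu : BD u (inv3 n a)) :
    BD t a := by
  intro l hl
  obtain ⟨D, hD⟩ := hu (push n l) (by rw [← dot_pull, pull_push, hl])
  refine ⟨D + (n + 2 : ℕ) * bd l, fun j => ?_⟩
  have hp : pre j t <+: Lam n (pre j u) := by
    rw [← h j]
    apply pre_prefix
    have := Lam_len n (pre j u)
    simpa using this
  obtain ⟨y', s, h1, h2, h3⟩ := prefix_Lam n _ _ hp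
  rw [h2, wt_append]
  have e : wt l (Lam n y') = wt (push n l) y' := by
    rw [← wt_pull n (push n l), pull_push]
  rw [e, prefix_pre h1]
  exact (abs_add_le _ _).trans (add_le_add (hD _) (wt_bd' l s _ h3))

lemma up_N (n : ℕ → ℕ) (a : ℕ → Fin 3 → ℝ) (ha : ∀ j, a (j+1) = inv3 (n j) (a j)) (R : ℕ)
    (u : Seq3) (hu : u ∈ MaxSet) (hb : BD u (a R)) (k : ℕ) :
    ∃ w ∈ MaxSet, BD w (a 0) ∧ pre (SubN n R (pre k u)).length w = SubN n R (pre k u) := by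
  suffices H : ∀ (y : W3), pre y.length u = y →
      ∃ w ∈ MaxSet, BD w (a 0) ∧ pre (SubN n R y).length w = SubN n R y from
    H _ (by simp)
  induction R generalizing u with
  | zero => intro y hy; exact ⟨u, hu, hb, hy⟩
  | succ R ih =>
    intro y hy
    obtain ⟨t, ht⟩ := Rl_exists (n R) u
    rw [ha] at hb
    have := ht y.length
    rw [hy] at this
    exact ih t (Rl_max ht hu) (Rl_BD ht hb) _ this


lemma BD_of_iter (K : ℕ) (u : Seq3) (a : Fin 3 → ℝ) (h : BD (shift^[K] u) a) : BD u a := by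
  intro l hl
  obtain ⟨D, hD⟩ := h l hl
  refine ⟨K * bd l + D, fun N => ?_⟩
  have hD0 : 0 ≤ D := (abs_nonneg _).trans (hD 0)
  rcases le_total N K with h | h
  · have := wt_bd' l (pre N u) K (by simpa using h)
    linarith
  · obtain ⟨m, rfl⟩ := Nat.exists_eq_add_of_le h
    rw [pre_add, wt_append]
    exact (abs_add_le _ _).trans (add_le_add (wt_bd' l _ K (by simp)) (hD m))

lemma floor_step (x d : ℝ) (hx : 0 ≤ x) (hd : 0 ≤ d) (hd1 : d ≤ 1) :
    ⌊x + d⌋₊ = ⌊x⌋₊ ∨ ⌊x + d⌋₊ = ⌊x⌋₊ + 1 := by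
  have h1 : ⌊x⌋₊ ≤ ⌊x + d⌋₊ := Nat.floor_le_floor (by linarith)
  have h2 : ⌊x + d⌋₊ ≤ ⌊x + 1⌋₊ := Nat.floor_le_floor (by linarith)
  rw [Nat.floor_add_one hx] at h2
  omega

lemma exists_beatty (g d : ℝ) (hg : 0 ≤ g) (hg1 : g < 1) (hd : 0 ≤ d) (hd1 : d ≤ 1) :
    ∃ s : Seq3, s 0 ≠ 2 ∧ (∃ K : ℕ, ∀ m, ∃ j < K, s (m + j) ≠ 2) ∧
      ∀ m : ℕ, ∃ z c : ℝ, (∀ l, wt l (pre m s) = z * l 0 + (m - c - z) * l 1 + c * l 2) ∧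
        |c - m * g| ≤ 1 ∧ |z - (m - c) * d| ≤ 1 := by
  classical
  let c : ℕ → ℕ := fun m => ⌊(m:ℝ) * g⌋₊
  let e : ℕ → ℝ := fun m => (m:ℝ) - c m
  let z : ℕ → ℕ := fun m => ⌊e m * d⌋₊
  have hc : ∀ m, c (m+1) = c m ∨ c (m+1) = c m + 1 := by
    intro m
    have := floor_step (m * g) g (by positivity) hg hg1.le
    simp only [c]; push_cast; rwa [add_mul, one_mul]
  have hcm : ∀ m : ℕ, (c m : ℝ) ≤ m * g := fun m => Nat.floor_le (by positivity)
  have hcm' : ∀ m : ℕ, (m:ℝ) * g < c m + 1 := fun m => Nat.lt_floor_add_one _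
  have he : ∀ m, 0 ≤ e m := by
    intro m
    have h1 := hcm m
    have : (m:ℝ) * g ≤ m := mul_le_of_le_one_right (Nat.cast_nonneg m) hg1.le
    simp only [e]; linarith
  have hz : ∀ m, c (m+1) = c m → z (m+1) = z m ∨ z (m+1) = z m + 1 := by
    intro m h
    have e1 : e (m+1) = e m + 1 := by simp only [e, h]; push_cast; ring
    have := floor_step (e m * d) d (mul_nonneg (he m) hd) hd hd1
    simp only [z]; rwa [e1, add_mul, one_mul]
  have hz' : ∀ m, c (m+1) = c m + 1 → z (m+1) = z m := by
    intro m h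
    have e1 : e (m+1) = e m := by simp only [e, h]; push_cast; ring
    simp only [z, e1]
  let s : Seq3 := fun m => if c (m+1) = c m + 1 then 2 else if z (m+1) = z m + 1 then 0 else 1
  have hs2 : ∀ m, s m = 2 → c (m+1) = c m + 1 := by
    intro m hm
    by_contra h
    simp only [s, if_neg h] at hm
    split_ifs at hm <;> exact absurd hm (by decide)
  refine ⟨s, ?_, ?_, ?_⟩
  · intro h
    have := hs2 0 h
    have h1 := hcm 1
    have : (c 1 : ℝ) = c 0 + 1 := by exact_mod_cast this
    have h2 : (0:ℝ) ≤ c 0 := Nat.cast_nonneg _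
    push_cast at h1
    linarith
  · obtain ⟨K, hK⟩ := exists_nat_gt (1 / (1 - g))
    refine ⟨K, fun m => ?_⟩
    by_contra hcon
    push Not at hcon
    have : ∀ j ≤ K, c (m + j) = c m + j := by
      intro j
      induction j with
      | zero => intro _; rfl
      | succ j ih =>
        intro hj
        have := hs2 _ (hcon j (by omega))
        rw [← Nat.add_assoc, this, ih (by omega)]; ring
    have h1 := this K le_rfl
    have h2 := hcm (m + K)
    have h3 := hcm' m
    rw [h1] at h2
    push_cast at h2
    rw [div_lt_iff₀ (by linarith)] at hK
    nlinarith
  · intro m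
    refine ⟨z m, c m, ?_, ?_, ?_⟩
    · intro l
      induction m with
      | zero => simp [pre, c, z, e]
      | succ m ih =>
        rw [pre_succ', wt_append, ih, wt_cons, wt_nil]
        rcases hc m with h | h
        · rcases hz m h with h' | h'
          · have : s m = 1 := by simp [s, h, h']
            rw [this, h, h']; push_cast; ring
          · have : s m = 0 := by simp [s, h, h']
            rw [this, h, h']; push_cast; ring
        · have : s m = 2 := by simp [s, h]
          rw [this, h, hz' m h]; push_cast; ring
    · have h1 := hcm m
      have h2 := hcm' m
      rw [abs_le]; constructor <;> linarith
    · have h1 : (z m : ℝ) ≤ e m * d := Nat.floor_le (mul_nonneg (he m) hd)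
      have h2 : e m * d < z m + 1 := Nat.lt_floor_add_one _
      change |(z m : ℝ) - e m * d| ≤ 1
      rw [abs_le]; constructor <;> linarith

lemma exists_max (a : Fin 3 → ℝ) (h0 : 0 ≤ a 0) (h1 : 0 ≤ a 1) (h2 : 0 < a 2) (k : ℕ) :
    ∃ u ∈ MaxSet, BD u a ∧ pre k u = Tw k := by
  have preTw : ∀ (u : Seq3) (k : ℕ), (∀ i < k, u i = 2) → pre k u = Tw k := by
    intro u k hu
    apply List.ext_getElem (by simp [Tw])
    intro i h1 h2
    rw [pre_get]; simp [Tw]; exact hu i (by simpa using h1)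
  by_cases h : a 0 + a 1 = 0
  · have e0 : a 0 = 0 := by linarith
    have e1 : a 1 = 0 := by linarith
    refine ⟨fun _ => 2, ⟨rfl, fun r => Or.inl ?_⟩, ?_, preTw _ _ (fun _ _ => rfl)⟩
    · funext i; rw [iter_shift]
    · intro l hl
      have : l 2 = 0 := by
        simp [dot, e0, e1] at hl
        exact hl.resolve_right h2.ne'
      refine ⟨0, fun N => ?_⟩
      rw [preTw _ _ (fun _ _ => rfl)]
      simp [wt, Tw, this]
  · have hp : 0 < a 0 + a 1 := lt_of_le_of_ne (by linarith) (Ne.symm h)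
    have hS : 0 < a 0 + a 1 + a 2 := by linarith
    obtain ⟨s, hs0, ⟨K, hK⟩, hw⟩ := exists_beatty (a 2 / (a 0 + a 1 + a 2)) (a 0 / (a 0 + a 1))
      (by positivity) (by rw [div_lt_one hS]; linarith) (by positivity)
      (by rw [div_le_one hp]; linarith)
    set g := a 2 / (a 0 + a 1 + a 2) with hg
    set d := a 0 / (a 0 + a 1) with hd
    let L := K + k + 1
    let u : Seq3 := fun i => if i < L then 2 else s (i - L)
    have hu1 : ∀ i < L, u i = 2 := fun i hi => by simp [u, hi]
    have hu2 : ∀ i, u (L + i) = s i := fun i => by simp [u]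
    have hsh : shift^[L] u = s := by funext i; rw [iter_shift, hu2]
    refine ⟨u, ⟨hu1 0 (by omega), ?_⟩, ?_, preTw _ _ (fun i hi => hu1 i (by omega))⟩
    · intro r
      rcases Nat.eq_zero_or_pos r with rfl | hr
      · exact Or.inl rfl
      · have : ∃ j, j < L ∧ u (r + j) ≠ 2 := by
          rcases le_or_gt r L with h | h
          · refine ⟨L - r, by omega, ?_⟩
            have : r + (L - r) = L + 0 := by omega
            rw [this, hu2]; exact hs0
          · obtain ⟨j, hj, hj'⟩ := hK (r - L)
            refine ⟨j, by omega, ?_⟩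
            have : r + j = L + (r - L + j) := by omega
            rw [this, hu2]; exact hj'
        classical
        right
        refine ⟨Nat.find this, fun i hi => ?_, ?_⟩
        · have h3 := Nat.find_min this hi
          have h4 := (Nat.find_spec this).1
          rw [iter_shift, hu1 i (by omega)]
          by_contra h5
          exact h3 ⟨by omega, h5⟩
        · obtain ⟨h4, h5⟩ := Nat.find_spec this
          rw [iter_shift, hu1 _ h4]
          revert h5; generalize u (r + Nat.find this) = x; revert x; decide
    · apply BD_of_iter L
      rw [hsh]
      intro l hl
      refine ⟨(|d| * 1 + 1) * |l 0| + (1 + (|d| * 1 + 1)) * |l 1| + 1 * |l 2|, fun m => ?_⟩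
      obtain ⟨z, c, hz, hc1, hc2⟩ := hw m
      rw [hz]
      set A := c - m * g with hA
      set B := z - (m - c) * d with hB
      have e1 : (1 - g) * d * l 0 + ((1 - g) - (1 - g) * d) * l 1 + g * l 2 = 0 := by
        have : (1 - g) * d = a 0 / (a 0 + a 1 + a 2) := by
          rw [hg, hd]; field_simp; ring
        rw [this, hg]
        unfold dot at hl
        field_simp
        linarith
      have e2 : z * l 0 + (m - c - z) * l 1 + c * l 2
          = (B - d * A) * l 0 + (-A - (B - d * A)) * l 1 + A * l 2
            + m * ((1 - g) * d * l 0 + ((1 - g) - (1 - g) * d) * l 1 + g * l 2) := by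
        rw [hA, hB]; ring
      rw [e2, e1, mul_zero, add_zero]
      have hBA : |B - d * A| ≤ |d| * 1 + 1 := by
        refine (abs_sub _ _).trans ?_
        rw [abs_mul, add_comm]
        gcongr
      refine (abs_add_three _ _ _).trans ?_
      rw [abs_mul, abs_mul, abs_mul]
      have : |-A - (B - d * A)| ≤ 1 + (|d| * 1 + 1) := by
        refine (abs_sub _ _).trans ?_
        rw [abs_neg]; gcongr
      gcongr


lemma wt_birk (l : Fin 3 → ℝ) (N : ℕ) (s : Seq3) : wt l (pre N s) = dot l (birk s N) := by
  induction N generalizing s with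
  | zero => simp [pre, birk, dot]
  | succ N ih =>
    have : birk s (N+1) = birk (shift s) N + kappa s := by
      unfold birk; rw [Finset.sum_range_succ']; rfl
    rw [pre, wt_cons, ih, this]
    have : l (s 0) = dot l (kappa s) := by
      unfold dot kappa
      rcases fin3 (s 0) with e | e | e <;> rw [e] <;> simp
    rw [this]; simp [dot]; ring

lemma birk_sum (s : Seq3) (N : ℕ) : birk s N 0 + birk s N 1 + birk s N 2 = N := by
  have h := wt_birk (fun _ => 1) N s
  simp [wt, dot] at h
  exact h.symm

lemma BD_freq (s : Seq3) (a : Fin 3 → ℝ) (ha : a 0 + a 1 + a 2 = 1) (h : BD s a) :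
    hasFreq s a := by
  unfold hasFreq
  rw [tendsto_pi_nhds]
  intro i
  obtain ⟨D, hD⟩ := h (fun j => (if j = i then 1 else 0) - a i) (by
    unfold dot
    have : a 0 * a i + a 1 * a i + a 2 * a i = a i := by rw [← add_mul, ← add_mul, ha, one_mul]
    rcases fin3 i with rfl | rfl | rfl <;> simp <;> linarith)
  have key : ∀ N : ℕ, |birk s N i - a i * N| ≤ D := by
    intro N
    have h1 := hD N
    rw [wt_birk] at h1
    have : dot (fun j => (if j = i then 1 else 0) - a i) (birk s N) = birk s N i - a i * N := by
      rw [← birk_sum s N]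
      unfold dot
      rcases fin3 i with rfl | rfl | rfl <;> simp <;> ring
    rwa [this] at h1
  rw [tendsto_iff_norm_sub_tendsto_zero]
  have hlim : Tendsto (fun N : ℕ => D / (N:ℝ)) atTop (nhds 0) :=
    tendsto_const_div_atTop_nhds_zero_nat D
  refine squeeze_zero' (Eventually.of_forall fun _ => norm_nonneg _) ?_ hlim
  filter_upwards [eventually_gt_atTop 0] with N hN
  have hN' : (0:ℝ) < N := by exact_mod_cast hN
  have : ((N:ℝ)⁻¹ • birk s N) i - a i = (birk s N i - a i * N) / N := by
    simp; field_simp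
  rw [this, Real.norm_eq_abs, abs_div, abs_of_pos hN']
  gcongr
  exact key N

lemma dot_cont (l : Fin 3 → ℝ) : Continuous (dot l) := by
  unfold dot; fun_prop

lemma DFMZ_le {X : Set Seq3} {v : Fin 3 → ℝ} (hv : v ∈ DFMZ X) (l : Fin 3 → ℝ) (c : ℝ)
    (h : ∀ s ∈ X, ∀ N, wt l (pre N s) ≤ c) : dot l v ≤ 0 := by
  obtain ⟨s, r, hs, hr, ht⟩ := hv
  have h1 := ((dot_cont l).tendsto v).comp ht
  have h2 : Tendsto (fun i => c / (r i : ℝ)) atTop (nhds 0) :=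
    (tendsto_const_div_atTop_nhds_zero_nat c).comp hr
  refine le_of_tendsto_of_tendsto h1 h2 (Eventually.of_forall fun i => ?_)
  have h3 := h (s i) (hs i) (r i)
  rw [wt_birk] at h3
  have : dot l ((r i : ℝ)⁻¹ • birk (s i) (r i)) = dot l (birk (s i) (r i)) / r i := by
    simp [dot]; ring
  simp only [Function.comp]
  rw [this]
  gcongr

lemma DFMZ_sum {X : Set Seq3} {v : Fin 3 → ℝ} (hv : v ∈ DFMZ X) : v 0 + v 1 + v 2 = 1 := by
  obtain ⟨s, r, hs, hr, ht⟩ := hv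
  have h1 := ((dot_cont (fun _ => 1)).tendsto v).comp ht
  have h2 : dot (fun _ => 1) v = 1 := by
    refine tendsto_nhds_unique h1 (tendsto_const_nhds.congr' ?_)
    filter_upwards [hr.eventually_gt_atTop 0] with i hi
    have hi' : (r i : ℝ) ≠ 0 := by exact_mod_cast hi.ne'
    have := birk_sum (s i) (r i)
    simp [dot]
    rw [← mul_add, ← mul_add, this]; field_simp
  simpa [dot] using h2

lemma lt_append_of_len {l P m : W3} (h : l < P) (hl : l.length = P.length) : l ++ m < P := by
  induction l generalizing P with
  | nil =>
    have : P = [] := by simpa using hl.symm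
    subst this; exact absurd h (lt_irrefl _)
  | cons a l ih =>
    cases P with
    | nil => simp at hl
    | cons b P =>
      rw [clt] at h
      rw [List.cons_append, clt]
      rcases h with h | ⟨h, h'⟩
      · exact Or.inl h
      · exact Or.inr ⟨h, ih h' (by simpa using hl)⟩

lemma pre_lt {P : W3} {s : Seq3} (h : pre P.length s < P) (N : ℕ) : pre N s < P := by
  rcases le_total N P.length with hN | hN
  · obtain ⟨t, ht⟩ := pre_prefix hN s
    refine lt_of_le_of_lt ?_ h
    rw [← ht]; exact le_append' _ _
  · obtain ⟨m, rfl⟩ := Nat.exists_eq_add_of_le hN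
    rw [pre_add]; exact lt_append_of_len h (by simp)

lemma suffix_pre {N : ℕ} {s : Seq3} {y : W3} (h : y <:+ pre N s) :
    ∃ m M, y = pre M (shift^[m] s) := by
  obtain ⟨t, ht⟩ := h
  have hl : t.length + y.length = N := by
    have := congrArg List.length ht
    simpa using this
  rw [← hl, pre_add] at ht
  exact ⟨_, _, (List.append_inj ht (by simp)).2⟩

lemma Good_DFMZ {P : W3} {l : Fin 3 → ℝ} (hG : Good P l) {X : Set Seq3}
    (hX : ∀ s ∈ X, ∀ m, pre P.length (shift^[m] s) < P) {v : Fin 3 → ℝ} (hv : v ∈ DFMZ X) :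
    dot l v ≤ 0 := by
  obtain ⟨c, hc⟩ := hG
  refine DFMZ_le hv l c fun s hs N => hc _ fun y hy => ?_
  obtain ⟨m, M, rfl⟩ := suffix_pre hy
  exact pre_lt (hX s hs m) M

lemma SubN_nonneg (n : ℕ → ℕ) (R : ℕ) (l : Fin 3 → ℝ) (Y : Set W3)
    (h : ∃ c, ∀ y ∈ Y, ∀ x, x <:+: y → -c ≤ wt l x) :
    ∃ c, ∀ y ∈ Y, ∀ x, x <:+: SubN n R y → -c ≤ wt (pullN n R l) x := by
  induction R generalizing l Y with
  | zero => exact h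
  | succ R ih =>
    obtain ⟨c, hc⟩ := h
    have := ih (pull (n R) l) (Lam (n R) '' Y) ⟨c + (n R + 2 : ℕ) * bd (pull (n R) l)
        + (n R + 2 : ℕ) * bd (pull (n R) l), by
      rintro _ ⟨y, hy, rfl⟩ x hx
      obtain ⟨y', p, s, h1, rfl, h3, h4⟩ := infix_Lam _ _ _ hx
      rw [wt_append, wt_append, wt_pull]
      have a1 := hc y hy y' h1
      have a2 := (abs_le.1 (wt_bd' (pull (n R) l) p _ h3)).1
      have a3 := (abs_le.1 (wt_bd' (pull (n R) l) s _ h4)).1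
      linarith⟩
    obtain ⟨c', hc'⟩ := this
    exact ⟨c', fun y hy x hx => hc' _ ⟨y, hy, rfl⟩ x hx⟩

lemma SubN_prefix (n : ℕ → ℕ) (R : ℕ) {x y : W3} (h : x <+: y) : SubN n R x <+: SubN n R y := by
  induction R generalizing x y with
  | zero => exact h
  | succ R ih => exact ih (Lam_prefix _ h)

lemma SubN_len (n : ℕ → ℕ) (R : ℕ) (y : W3) : y.length ≤ (SubN n R y).length := by
  induction R generalizing y with
  | zero => exact le_rfl
  | succ R ih => exact (Lam_len _ y).trans (ih _)

lemma SubN_append (n : ℕ → ℕ) (R : ℕ) (x y : W3) :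
    SubN n R (x ++ y) = SubN n R x ++ SubN n R y := by
  induction R generalizing x y with
  | zero => rfl
  | succ R ih => simp only [SubN, Lam_append, ih]

lemma SubN_factor (n : ℕ → ℕ) (r j : ℕ) (y : W3) : ∃ y', SubN n (r + j) y = SubN n r y' := by
  induction j generalizing y with
  | zero => exact ⟨y, rfl⟩
  | succ j ih => exact ih _

lemma SubN_zero_block (n : ℕ → ℕ) (R : ℕ) (k : ℕ) (h : n R = 0) :
    SubN n (R+1) (Tw k) = SubN n R (Tw k) := by
  rw [SubN, h]; congr 1
  induction k with
  | zero => rfl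
  | succ k ih =>
    change Lam 0 (2 :: Tw k) = 2 :: Tw k
    rw [Lam_cons, ih]; rfl

def Orb (n : ℕ → ℕ) (a : ℕ → Fin 3 → ℝ) : Prop := ∀ j, a (j+1) = inv3 (n j) (a j)

def Adm (n : ℕ → ℕ) (R k : ℕ) : Prop :=
  ∀ a, Orb n a → (∀ j, 0 < a j 2) → 0 < dot (base k) (a R)

lemma Adm_zero (n : ℕ → ℕ) (R : ℕ) : Adm n R 0 := by
  intro a _ h
  simpa [dot, base0, base1, base2] using h R

lemma Adm_of_zero (n : ℕ → ℕ) (R k : ℕ) (h : ∀ j, R ≤ j → n j = 0) : Adm n R k := by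
  intro a ha hp
  have : ∀ i, a (R + 2 * i) 0 = a R 0 ∧ a (R + 2 * i) 1 = a R 1 ∧
      a (R + 2 * i) 2 = a R 2 - i * (a R 0 + a R 1) := by
    intro i
    induction i with
    | zero => simp
    | succ i ih =>
      have e1 := ha (R + 2 * i)
      have e2 := ha (R + 2 * i + 1)
      rw [h _ (by omega)] at e1 e2
      have : R + 2 * (i+1) = R + 2 * i + 1 + 1 := by ring
      rw [this, e2, e1]
      obtain ⟨h1, h2, h3⟩ := ih
      simp [inv3, h1, h2, h3]; ring
  have h1 := hp (R + 2 * k)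
  rw [(this k).2.2] at h1
  simp only [dot, base0, base1, base2]; linarith

lemma Long (n : ℕ → ℕ) (r N : ℕ) :
    ∃ R k, r ≤ R ∧ Adm n R k ∧ N ≤ (SubN n R (Tw (k+1))).length := by
  by_cases h : ∃ R, ∀ j, R ≤ j → n j = 0
  · obtain ⟨R, hR⟩ := h
    refine ⟨max r R, N, le_max_left _ _, Adm_of_zero n _ _ fun j hj => hR j (by omega), ?_⟩
    have := SubN_len n (max r R) (Tw (N+1))
    simp [Tw] at this ⊢; omega
  · push Not at h
    suffices H : ∃ R, r ≤ R ∧ N ≤ (SubN n R (Tw 1)).length by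
      obtain ⟨R, h1, h2⟩ := H
      exact ⟨R, 0, h1, Adm_zero n R, h2⟩
    have mono : ∀ R, SubN n R (Tw 1) <+: SubN n (R+1) (Tw 1) := by
      intro R
      exact SubN_prefix n R ⟨Z (n R), by simp [Tw, Lam]⟩
    have mono' : ∀ R j, (SubN n R (Tw 1)).length ≤ (SubN n (R+j) (Tw 1)).length := by
      intro R j
      induction j with
      | zero => exact le_rfl
      | succ j ih => exact ih.trans (mono _).length_le
    induction N with
    | zero => exact ⟨r, le_rfl, Nat.zero_le _⟩
    | succ N ih =>
      obtain ⟨R, h1, h2⟩ := ih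
      obtain ⟨j, hj, hn⟩ := h R
      refine ⟨j+1, by omega, ?_⟩
      obtain ⟨i, rfl⟩ := Nat.exists_eq_add_of_le hj
      have h3 := mono' R i
      obtain ⟨q, hq⟩ := Nat.exists_eq_succ_of_ne_zero hn
      have : SubN n (R+i+1) (Tw 1) = SubN n (R+i) (Tw 1) ++ SubN n (R+i) (Z (q+1)) := by
        rw [← SubN_append, SubN, hq]; congr 1; simp [Tw, Lam]
      rw [this, List.length_append]
      have h4 := SubN_len n (R+i) (Z (q+1))
      simp [Z] at h4
      have h5 : q + 1 ≤ (SubN n (R+i) (Z (q+1))).length := h4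
      omega

noncomputable def nn (a : Fin 3 → ℝ) : ℕ := ⌊a 0 / a 2⌋₊
noncomputable def orb (a : Fin 3 → ℝ) : ℕ → Fin 3 → ℝ
  | 0 => a
  | j+1 => inv3 (nn (orb a j)) (orb a j)
def orbn (n : ℕ → ℕ) (a : Fin 3 → ℝ) : ℕ → Fin 3 → ℝ
  | 0 => a
  | j+1 => inv3 (n j) (orbn n a j)

lemma orb_cone (a : Fin 3 → ℝ) (h : 0 ≤ a 0 ∧ 0 ≤ a 1 ∧ 0 < a 2) (j : ℕ) :
    0 ≤ orb a j 0 ∧ 0 ≤ orb a j 1 ∧ 0 < orb a j 2 := by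
  induction j with
  | zero => exact h
  | succ j ih =>
    obtain ⟨h0, h1, h2⟩ := ih
    have f1 : (nn (orb a j) : ℝ) ≤ orb a j 0 / orb a j 2 := Nat.floor_le (by positivity)
    have f2 : orb a j 0 / orb a j 2 < nn (orb a j) + 1 := Nat.lt_floor_add_one _
    rw [le_div_iff₀ h2] at f1
    rw [div_lt_iff₀ h2] at f2
    simp only [orb, inv3]
    refine ⟨by simpa using h1, by simpa using f1, by simpa using f2⟩

lemma pos_of_nonneg (n : ℕ → ℕ) (a : ℕ → Fin 3 → ℝ) (ha : Orb n a) (h : ∀ j i, 0 ≤ a j i)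
    (h0 : a 0 0 + a 0 1 + a 0 2 = 1) (j : ℕ) : 0 < a j 2 := by
  have hS : ∀ j, 0 < a j 0 + a j 1 + a j 2 := by
    intro j
    induction j with
    | zero => rw [h0]; exact one_pos
    | succ j ih =>
      by_contra hc
      have e0 := h (j+1) 0
      have e1 := h (j+1) 1
      have e2 := h (j+1) 2
      have z0 : a (j+1) 0 = 0 := by linarith
      have z1 : a (j+1) 1 = 0 := by linarith
      have z2 : a (j+1) 2 = 0 := by linarith
      rw [ha j] at z0 z1 z2
      simp [inv3] at z0 z1 z2
      have y2 : a j 2 = 0 := by linarith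
      rw [y2] at z1
      linarith
  have h1 := hS (j+2)
  rw [ha (j+1), ha j] at h1
  simp [inv3] at h1
  linarith

lemma nhds_pre (N : ℕ) (s : Seq3) : {t : Seq3 | pre N t = pre N s} ∈ nhds s := by
  have : {t : Seq3 | pre N t = pre N s} = ⋂ i ∈ Finset.range N, {t : Seq3 | t i = s i} := by
    ext t; simp [pre_eq_iff]
  rw [this, Filter.biInter_finset_mem]
  intro i _
  have ho : IsOpen {t : Seq3 | t i = s i} :=
    (isOpen_discrete {s i}).preimage (continuous_apply (A := fun _ : ℕ => Fin 3) i)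
  exact ho.mem_nhds rfl

lemma Tw_succ (k : ℕ) : Tw (k+1) = 2 :: Tw k := rfl

lemma Sg_base (k : ℕ) : Sg (base k) := by
  refine ⟨?_, ?_, ?_⟩ <;> simp [base0, base1, base2]

lemma Good_Adm (n : ℕ → ℕ) (R k : ℕ) :
    Good (SubN n R (Tw (k+1))) (pullN n R (base k)) :=
  Good_N n R (Tw k) _ (Sg_base k) (Good_base k)

lemma infimax_prefix (α : Fin 3 → ℝ) (hα : α ∈ Delta') (Iα : Seq3) (hI : IsInfimax α Iα)
    (R k : ℕ) (hA : Adm (fun j => nn (orb α j)) R k) :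
    pre (SubN (fun j => nn (orb α j)) R (Tw (k+1))).length Iα
      = SubN (fun j => nn (orb α j)) R (Tw (k+1)) := by
  set n : ℕ → ℕ := fun j => nn (orb α j) with hn
  set P := SubN n R (Tw (k+1)) with hP
  have hcone := orb_cone α ⟨hα.1.1 0, hα.1.1 1, hα.2⟩
  have horb : Orb n (orb α) := fun j => rfl
  obtain ⟨-, -, hlow, hglb⟩ := hI
  apply le_antisymm
  · obtain ⟨h0, h1, h2⟩ := hcone R
    obtain ⟨u, hu, hb, hk⟩ := exists_max (orb α R) h0 h1 h2 (k+1)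
    obtain ⟨w, hw, hwb, hwp⟩ := up_N n (orb α) horb R u hu hb (k+1)
    rw [hk] at hwp
    have := hlow w ⟨hw, BD_freq w α hα.1.2 hwb⟩
    exact (lexLe_pre this _).trans hwp.le
  · have : lexLe (pad P) Iα := by
      apply hglb
      rintro w ⟨hw, hf⟩
      apply pad_le
      by_contra hlt
      rw [not_le] at hlt
      have hd := Good_DFMZ (Good_Adm n R k) (X := {w}) (v := α) (by
        rintro s rfl m
        exact lt_of_le_of_lt (lexLe_pre (hw.2 m) _) hlt)
        ⟨fun _ => w, fun i => i, fun _ => rfl, tendsto_id, hf⟩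
      have := dot_pullN n (orb α) horb R (base k)
      rw [show orb α 0 = α from rfl] at this
      rw [this] at hd
      exact absurd (hA _ horb fun j => (hcone j).2.2) (not_lt.2 hd)
    have := lexLe_pre this P.length
    rwa [pad_pre] at this

/-- Any minimal set `C ⊆ B(I(α))` whose Misiurewicz–Ziemian digit
frequency set meets that of `C_α` equals `C_α`. -/
theorem stmt16 (α : Fin 3 → ℝ) (hα : α ∈ Delta') (Iα : Seq3) (hI : IsInfimax α Iα)
    (C : Set Seq3) (hC : IsMinimalSet shift C) (hCsub : C ⊆ BetaShift Iα)
    (hmeet : (DFMZ C ∩ DFMZ (orbitClosure Iα)).Nonempty) :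
    C = orbitClosure Iα := by

  set n : ℕ → ℕ := fun j => nn (orb α j) with hn
  have hpre := infimax_prefix α hα Iα hI
  obtain ⟨v, hvC, hvI⟩ := hmeet
  -- infixes
  have hinf : ∀ r, ∀ s ∈ orbitClosure Iα, ∀ N, ∃ y, pre N s <:+: SubN n r y := by
    intro r s hs N
    obtain ⟨t, ht, ⟨m, rfl⟩⟩ := mem_closure_iff_nhds.1 hs _ (nhds_pre N s)
    obtain ⟨R, k, hR, hA, hlen⟩ := Long n r (m + N)
    obtain ⟨j, rfl⟩ := Nat.exists_eq_add_of_le hR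
    obtain ⟨y, hy⟩ := SubN_factor n r j (Tw (k+1))
    refine ⟨y, ?_⟩
    rw [← hy, ← hpre _ _ hA]
    have h1 : pre N s <:+: pre (m + N) Iα := by
      have h2 : pre N (shift^[m] Iα) = pre N s := ht
      rw [pre_add, h2]
      exact (List.suffix_append _ _).isInfix
    exact h1.trans (pre_prefix hlen Iα).isInfix
  have horb : Orb n (orbn n v) := fun j => rfl
  have hnonneg : ∀ r i, 0 ≤ orbn n v r i := by
    intro r i
    let e : Fin 3 → ℝ := fun j => if j = i then 1 else 0
    obtain ⟨c, hc⟩ := SubN_nonneg n r e Set.univ ⟨0, by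
      intro y _ x _
      rw [neg_zero]
      apply List.sum_nonneg
      intro z hz
      obtain ⟨j, -, rfl⟩ := List.mem_map.1 hz
      simp only [e]; split_ifs <;> norm_num⟩
    have h1 := DFMZ_le hvI (fun j => - pullN n r e j) c (by
      intro s hs N
      obtain ⟨y, hy⟩ := hinf r s hs N
      have h2 := hc y trivial _ hy
      have h3 : wt (fun j => - pullN n r e j) (pre N s) = - wt (pullN n r e) (pre N s) := by
        rw [wt_birk, wt_birk]; simp only [dot]; ring
      linarith)
    have h4 : dot (fun j => - pullN n r e j) v = - dot (pullN n r e) v := by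
      simp only [dot]; ring
    have h5 := dot_pullN n (orbn n v) horb r e
    rw [show orbn n v 0 = v from rfl] at h5
    have h6 : dot e (orbn n v r) = orbn n v r i := by
      simp only [dot, e]
      rcases fin3 i with rfl | rfl | rfl <;> simp
    linarith
  have hpos := pos_of_nonneg n (orbn n v) horb hnonneg (DFMZ_sum hvI)
  obtain ⟨-, hcomp, hmaps, hdense⟩ := hC
  have hIC : Iα ∈ C := by
    rw [← hcomp.isClosed.closure_eq, mem_closure_iff_nhds]
    intro U hU
    have hex : ∃ N, {t : Seq3 | pre N t = pre N Iα} ⊆ U := by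
      rw [nhds_pi, Filter.mem_pi] at hU
      obtain ⟨J, hJ, T, hT, hsub⟩ := hU
      obtain ⟨N, hN⟩ := hJ.bddAbove
      refine ⟨N+1, fun t ht => hsub ?_⟩
      intro i hi
      rw [(pre_eq_iff _ _ _).1 ht i (Nat.lt_succ_of_le (hN hi))]
      exact mem_of_mem_nhds (hT i)
    obtain ⟨N, hN⟩ := hex
    obtain ⟨R, k, -, hA, hlen⟩ := Long n 0 N
    have hP := hpre R k hA
    by_contra hcon
    have hd := Good_DFMZ (Good_Adm n R k) (X := C) (v := v) (by
      intro s hs m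
      have hsm : shift^[m] s ∈ C := hmaps.iterate m hs
      refine lt_of_le_of_ne ((lexLe_pre (hCsub hs m) _).trans hP.le) fun heq => hcon ?_
      refine ⟨shift^[m] s, hN ?_, hsm⟩
      have h1 := heq.trans hP.symm
      change pre N (shift^[m] s) = pre N Iα
      rw [pre_eq_iff] at h1 ⊢
      exact fun i hi => h1 i (lt_of_lt_of_le hi hlen)) hvC
    have := dot_pullN n (orbn n v) horb R (base k)
    rw [show orbn n v 0 = v from rfl] at this
    rw [this] at hd
    exact absurd (hA _ horb hpos) (not_lt.2 hd)
  apply Set.Subset.antisymm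
  · exact hdense Iα hIC
  · apply closure_minimal _ hcomp.isClosed
    rintro _ ⟨m, rfl⟩
    exact hmaps.iterate m hIC
end

section
/- Let α ∈ Δ' be regular, meaning that for every α' ∈ Δ', I(α') = I(α) implies α' = α. Then the restriction of the shift σ to C_α is uniquely ergodic (there is exactly one σ-invariant Borel probability measure supported on C_α), every point s ∈ C_α has Birkhoff digit frequency κ̂(s) = α, and the unique invariant measure μ satisfies ∫ κ dμ = α. -/
open Filter Topology MeasureTheory

lemma shift_iter (s : Seq3) (k i : ℕ) : (shift^[k] s) i = s (k + i) := by
  induction k generalizing s with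
  | zero => simp
  | succ k ih =>
    rw [Function.iterate_succ_apply, ih]
    simp only [shift]
    congr 1; omega

lemma continuous_shift : Continuous shift := by
  unfold shift; fun_prop

lemma continuous_kappa (i : Fin 3) : Continuous (fun s : Seq3 => kappa s i) := by
  unfold kappa
  exact (continuous_of_discreteTopology (f := fun d : Fin 3 => if i = d then (1:ℝ) else 0)).comp
    (continuous_apply 0)

lemma birk_apply (s : Seq3) (r : ℕ) (i : Fin 3) :
    birk s r i = ∑ j ∈ Finset.range r, kappa (shift^[j] s) i := by
  simp [birk]

/-- uniform averages -/
def UnifAvg (I : Seq3) : Prop := ∀ f : Seq3 → ℝ, Continuous f → ∃ c : ℝ, ∀ ε > 0, ∃ N0 : ℕ,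
  ∀ k, ∀ N ≥ N0, |∑ i ∈ Finset.range N, f (shift^[i] (shift^[k] I)) - c * N| ≤ ε * N

lemma avg_closure {I : Seq3} {f : Seq3 → ℝ} (hf : Continuous f) {c : ℝ}
    (h : ∀ ε > 0, ∃ N0 : ℕ, ∀ k, ∀ N ≥ N0,
      |∑ i ∈ Finset.range N, f (shift^[i] (shift^[k] I)) - c * N| ≤ ε * N) :
    ∀ s ∈ orbitClosure I, Tendsto (fun N : ℕ => (N:ℝ)⁻¹ * ∑ i ∈ Finset.range N, f (shift^[i] s))
      atTop (𝓝 c) := by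
  intro s hs
  rw [Metric.tendsto_atTop]
  intro ε hε
  obtain ⟨N0, hN0⟩ := h (ε/2) (by positivity)
  refine ⟨N0 + 1, fun N hN => ?_⟩
  have hcl : IsClosed {t : Seq3 | |∑ i ∈ Finset.range N, f (shift^[i] t) - c * N| ≤ ε/2 * N} := by
    apply isClosed_le _ continuous_const
    apply Continuous.abs
    apply Continuous.sub _ continuous_const
    apply continuous_finsetSum
    intro i _
    exact hf.comp (continuous_shift.iterate i)
  have hsub : orbitClosure I ⊆ {t : Seq3 | |∑ i ∈ Finset.range N, f (shift^[i] t) - c * N| ≤ ε/2 * N} := by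
    apply closure_minimal _ hcl
    rintro t ⟨r, rfl⟩
    exact hN0 r N (by omega)
  have := hsub hs
  simp only [Set.mem_ofPred_eq] at this
  have hNpos : (0:ℝ) < N := by exact_mod_cast (by omega : 0 < N)
  rw [Real.dist_eq]
  have e : (N:ℝ)⁻¹ * ∑ i ∈ Finset.range N, f (shift^[i] s) - c
      = (N:ℝ)⁻¹ * (∑ i ∈ Finset.range N, f (shift^[i] s) - c * N) := by
    field_simp
  rw [e, abs_mul, abs_of_pos (by positivity)]
  calc (N:ℝ)⁻¹ * _ ≤ (N:ℝ)⁻¹ * (ε/2 * N) := by gcongr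
    _ = ε/2 := by field_simp
    _ < ε := by linarith

lemma hasFreq_iff (s : Seq3) (v : Fin 3 → ℝ) : hasFreq s v ↔
    ∀ i, Tendsto (fun N : ℕ => (N:ℝ)⁻¹ * ∑ j ∈ Finset.range N, kappa (shift^[j] s) i)
      atTop (𝓝 (v i)) := by
  unfold hasFreq
  rw [tendsto_pi_nhds]
  simp [birk_apply]

noncomputable def emp (I : Seq3) (N : ℕ) : Measure Seq3 :=
  ((N:NNReal) + 1)⁻¹ • ∑ i ∈ Finset.range (N+1), Measure.dirac (shift^[i] I)

instance (I : Seq3) (N : ℕ) : IsProbabilityMeasure (emp I N) := by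
  constructor
  simp only [emp, Measure.smul_apply, Measure.coe_finsetSum, Finset.sum_apply, measure_univ]
  simp only [Finset.sum_const, Finset.card_range, nsmul_eq_mul, mul_one]
  rw [ENNReal.smul_def, smul_eq_mul]
  have : ((N + 1 : ℕ) : ENNReal) = (((N:NNReal) + 1 : NNReal) : ENNReal) := by push_cast; rfl
  rw [this, ← ENNReal.coe_mul, inv_mul_cancel₀ (by positivity)]
  simp

lemma emp_integral (I : Seq3) (N : ℕ) (f : Seq3 → ℝ) :
    ∫ x, f x ∂(emp I N) = ((N + 1 : ℕ):ℝ)⁻¹ * ∑ i ∈ Finset.range (N+1), f (shift^[i] I) := by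
  unfold emp
  rw [integral_smul_nnreal_measure, integral_finsetSum_measure]
  · simp [integral_dirac, NNReal.smul_def]
  · intro i _
    exact integrable_dirac (by simp)

lemma int_of_cont (μ : Measure Seq3) [IsFiniteMeasure μ] {f : Seq3 → ℝ} (hf : Continuous f) :
    Integrable f μ := by
  obtain ⟨C, hC⟩ := (isCompact_univ (X := Seq3)).exists_bound_of_continuousOn hf.continuousOn
  exact Integrable.of_bound hf.aestronglyMeasurable C (ae_of_all _ fun x => hC x trivial)

lemma inv_avg (μ : Measure Seq3) [IsProbabilityMeasure μ] (hμ : MeasurePreserving shift μ μ)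
    {f : Seq3 → ℝ} (hf : Continuous f) (i : ℕ) : ∫ x, f (shift^[i] x) ∂μ = ∫ x, f x ∂μ := by
  have h := hμ.iterate i
  rw [← h.map_eq]
  rw [integral_map h.measurable.aemeasurable hf.aestronglyMeasurable, h.map_eq]

theorem main_measure (I : Seq3) (α : Fin 3 → ℝ) (hI : hasFreq I α) (H : UnifAvg I) :
    (∃ μ : Measure Seq3,
      (IsProbabilityMeasure μ ∧ MeasurePreserving shift μ μ ∧ μ (orbitClosure I) = 1 ∧
        (∫ x, kappa x ∂μ) = α) ∧
      ∀ μ' : Measure Seq3, IsProbabilityMeasure μ' → MeasurePreserving shift μ' μ' →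
        μ' (orbitClosure I) = 1 → μ' = μ) ∧
    ∀ s ∈ orbitClosure I, hasFreq s α := by
  have hIC : I ∈ orbitClosure I := subset_closure ⟨0, rfl⟩
  have hcl : IsClosed (orbitClosure I) := isClosed_closure
  choose c hc using H
  have hclo : ∀ f (hf : Continuous f), ∀ s ∈ orbitClosure I, Tendsto
      (fun N : ℕ => (N:ℝ)⁻¹ * ∑ i ∈ Finset.range N, f (shift^[i] s)) atTop (𝓝 (c f hf)) :=
    fun f hf => avg_closure hf (hc f hf)
  have hck : ∀ i, c _ (continuous_kappa i) = α i := fun i =>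
    tendsto_nhds_unique (hclo _ (continuous_kappa i) I hIC) ((hasFreq_iff I α).1 hI i)
  -- limit measure
  let P : ℕ → ProbabilityMeasure Seq3 := fun N => ⟨emp I N, inferInstance⟩
  let U : Ultrafilter ℕ := Ultrafilter.of atTop
  have hU : (U : Filter ℕ) ≤ atTop := Ultrafilter.of_le _
  obtain ⟨μ, -, hμ⟩ := (isCompact_univ (X := ProbabilityMeasure Seq3)).ultrafilter_le_nhds
    (U.map P) (by simp)
  have hμ' : Tendsto P U (𝓝 μ) := hμ
  have hint : ∀ f (hf : Continuous f), ∫ x, f x ∂(μ : Measure Seq3) = c f hf := by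
    intro f hf
    have h1 := (ProbabilityMeasure.tendsto_iff_forall_integral_tendsto.1 hμ')
      (BoundedContinuousFunction.mkOfCompact ⟨f, hf⟩)
    have h2 : Tendsto (fun N => ∫ x, f x ∂(emp I N)) atTop (𝓝 (c f hf)) := by
      have := (hclo f hf I hIC).comp (tendsto_add_atTop_nat 1)
      refine this.congr fun N => ?_
      rw [emp_integral I N f]; rfl
    exact tendsto_nhds_unique h1 (h2.mono_left hU)
  have hmeas : Measurable shift := continuous_shift.measurable
  have key : ∀ μ' : Measure Seq3, IsProbabilityMeasure μ' → MeasurePreserving shift μ' μ' →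
        μ' (orbitClosure I) = 1 → ∀ f (hf : Continuous f), ∫ x, f x ∂μ' = c f hf := by
    intro μ' hp hinv h1 f hf
    have hae : ∀ᵐ x ∂μ', x ∈ orbitClosure I := by
      rw [← prob_compl_eq_zero_iff hcl.measurableSet] at h1
      exact h1
    obtain ⟨C, hC⟩ := (isCompact_univ (X := Seq3)).exists_bound_of_continuousOn hf.continuousOn
    have hC0 : 0 ≤ C := (norm_nonneg _).trans (hC I trivial)
    have ht : Tendsto (fun N : ℕ => ∫ x, ((N:ℝ)⁻¹ * ∑ i ∈ Finset.range N, f (shift^[i] x)) ∂μ') atTop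
        (𝓝 (∫ x, c f hf ∂μ')) := by
      apply tendsto_integral_of_dominated_convergence (fun _ => C)
      · intro N
        apply Continuous.aestronglyMeasurable
        apply continuous_const.mul
        apply continuous_finsetSum
        intro i _
        exact hf.comp (continuous_shift.iterate i)
      · exact integrable_const _
      · intro N
        refine ae_of_all _ fun x => ?_
        rw [norm_mul]
        have : ‖∑ i ∈ Finset.range N, f (shift^[i] x)‖ ≤ N * C := by
          refine (norm_sum_le_of_le _ (fun i _ => hC _ trivial)).trans ?_
          simp
        rcases Nat.eq_zero_or_pos N with h | h
        · subst h; simpa using hC0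
        · have hN : (0:ℝ) < N := by exact_mod_cast h
          rw [norm_inv, Real.norm_natCast]
          calc (N:ℝ)⁻¹ * _ ≤ (N:ℝ)⁻¹ * (N * C) := by gcongr
            _ = C := by field_simp
      · filter_upwards [hae] with x hx using hclo f hf x hx
    have hconst : ∀ᶠ N : ℕ in atTop, ∫ x, f x ∂μ' = ∫ x, ((N:ℝ)⁻¹ * ∑ i ∈ Finset.range N, f (shift^[i] x)) ∂μ' := by
      filter_upwards [eventually_gt_atTop 0] with N hN
      rw [integral_const_mul, integral_finsetSum]
      · simp_rw [inv_avg μ' hinv hf]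
        have hN : (0:ℝ) < N := by exact_mod_cast hN
        simp; field_simp
      · intro i _
        exact int_of_cont μ' (hf.comp (continuous_shift.iterate i))
    have := tendsto_nhds_unique (tendsto_const_nhds.congr' hconst) ht
    rw [this]; simp
  refine ⟨⟨μ, ⟨inferInstance, ⟨hmeas, ?_⟩, ?_, ?_⟩, ?_⟩, ?_⟩
  · have : IsProbabilityMeasure ((μ : Measure Seq3).map shift) :=
      Measure.isProbabilityMeasure_map hmeas.aemeasurable
    apply ext_of_forall_integral_eq_of_IsFiniteMeasure
    intro f
    rw [integral_map hmeas.aemeasurable f.continuous.aestronglyMeasurable]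
    have hfs : Continuous (fun x => f (shift x)) := f.continuous.comp continuous_shift
    rw [hint _ hfs, hint _ f.continuous]
    have h1 := hc _ hfs
    have h2 : ∀ ε > 0, ∃ N0 : ℕ, ∀ k, ∀ N ≥ N0,
      |∑ i ∈ Finset.range N, f (shift (shift^[i] (shift^[k] I))) - (c _ f.continuous) * N| ≤ ε * N := by
      intro ε hε
      obtain ⟨N0, h⟩ := hc _ f.continuous ε hε
      refine ⟨N0, fun k N hN => ?_⟩
      have := h (k+1) N hN
      simpa only [← Function.iterate_succ_apply', Function.iterate_succ_apply,
        ← Function.iterate_add_apply, Function.Commute.iterate_iterate_self] using this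
    exact tendsto_nhds_unique (avg_closure hfs h1 I hIC) (avg_closure hfs h2 I hIC)
  · have h := ProbabilityMeasure.limsup_measure_closed_le_of_tendsto hμ' hcl
    have h1 : ∀ N, (P N : Measure Seq3) (orbitClosure I) = 1 := by
      intro N
      have : ∀ᵐ x ∂(emp I N), x ∈ orbitClosure I := by
        unfold emp
        apply Measure.ae_smul_measure
        rw [← Measure.sum_coe_finset, Measure.ae_sum_iff]
        intro i
        refine (ae_dirac_iff (p := fun x => x ∈ orbitClosure I) hcl.measurableSet).2 ?_
        exact subset_closure ⟨_, rfl⟩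
      exact (prob_compl_eq_zero_iff hcl.measurableSet).1 this
    simp only [h1] at h
    rw [limsup_const] at h
    exact le_antisymm prob_le_one h
  · have : Integrable kappa (μ : Measure Seq3) := by
      apply Integrable.of_eval
      intro i; exact int_of_cont _ (continuous_kappa i)
    funext i
    rw [← hck i, ← hint _ (continuous_kappa i)]
    rw [eval_integral]
    intro i; exact int_of_cont _ (continuous_kappa i)
  · intro μ' hp hinv h1
    apply ext_of_forall_integral_eq_of_IsFiniteMeasure
    intro f
    rw [key μ' hp hinv h1 f f.continuous, hint _ f.continuous]
  · intro s hs
    rw [hasFreq_iff]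
    intro i
    rw [← hck i]
    exact hclo _ (continuous_kappa i) s hs


/-! ### the substitution -/

def blen (n : ℕ) (d : Fin 3) : ℕ := if d = 0 then 1 else if d = 1 then n + 2 else n + 1

def bpos (n : ℕ) (t : Seq3) (j : ℕ) : ℕ := ∑ i ∈ Finset.range j, blen n (t i)

def bidx (n : ℕ) (t : Seq3) (m : ℕ) : ℕ := Nat.findGreatest (fun j => bpos n t j ≤ m) m

def sub (n : ℕ) (t : Seq3) : Seq3 := fun m =>
  if bpos n t (bidx n t m) = m then (if t (bidx n t m) = 0 then 1 else 2) else 0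

lemma blen_pos (n : ℕ) (d : Fin 3) : 1 ≤ blen n d := by
  unfold blen; split_ifs <;> omega

lemma bpos_zero (n : ℕ) (t : Seq3) : bpos n t 0 = 0 := by simp [bpos]

lemma bpos_succ (n : ℕ) (t : Seq3) (j : ℕ) : bpos n t (j+1) = bpos n t j + blen n (t j) := by
  simp [bpos, Finset.sum_range_succ]

lemma bpos_strictMono (n : ℕ) (t : Seq3) : StrictMono (bpos n t) := by
  apply strictMono_nat_of_lt_succ
  intro j
  have := blen_pos n (t j)
  rw [bpos_succ]; omega

lemma le_bpos (n : ℕ) (t : Seq3) (j : ℕ) : j ≤ bpos n t j := (bpos_strictMono n t).le_apply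

lemma bidx_le (n : ℕ) (t : Seq3) (m : ℕ) : bpos n t (bidx n t m) ≤ m :=
  Nat.findGreatest_spec (P := fun j => bpos n t j ≤ m) (Nat.zero_le m) (by simp [bpos_zero])

lemma lt_bidx (n : ℕ) (t : Seq3) (m : ℕ) : m < bpos n t (bidx n t m + 1) := by
  by_contra h
  push Not at h
  have h1 : bidx n t m + 1 ≤ m := (le_bpos n t _).trans h
  have := Nat.le_findGreatest (P := fun j => bpos n t j ≤ m) h1 h
  unfold bidx at *
  omega

lemma block_unique {n : ℕ} {t : Seq3} {m i j : ℕ} (hi : bpos n t i ≤ m) (hi' : m < bpos n t (i+1))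
    (hj : bpos n t j ≤ m) (hj' : m < bpos n t (j+1)) : i = j := by
  have h1 := (bpos_strictMono n t).lt_iff_lt.1 (hi.trans_lt hj')
  have h2 := (bpos_strictMono n t).lt_iff_lt.1 (hj.trans_lt hi')
  omega

lemma bidx_eq {n : ℕ} {t : Seq3} {m j : ℕ}
    (hj : bpos n t j ≤ m) (hj' : m < bpos n t (j+1)) : bidx n t m = j :=
  block_unique (bidx_le n t m) (lt_bidx n t m) hj hj'

lemma sub_bpos (n : ℕ) (t : Seq3) (j : ℕ) : sub n t (bpos n t j) = if t j = 0 then 1 else 2 := by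
  have : bidx n t (bpos n t j) = j := bidx_eq le_rfl (bpos_strictMono n t (Nat.lt_succ_self j))
  simp [sub, this]

lemma sub_zero' {n : ℕ} {t : Seq3} {m j : ℕ} (hj : bpos n t j < m) (hj' : m < bpos n t (j+1)) :
    sub n t m = 0 := by
  have : bidx n t m = j := bidx_eq hj.le hj'
  simp [sub, this, hj.ne]

lemma sub_ne_zero_ex {n : ℕ} {t : Seq3} {m : ℕ} (h : sub n t m ≠ 0) : ∃ j, bpos n t j = m := by
  refine ⟨bidx n t m, ?_⟩
  by_contra h'
  apply h
  simp [sub, h']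

lemma sub_bpos_ne (n : ℕ) (t : Seq3) (j : ℕ) : sub n t (bpos n t j) ≠ 0 := by
  rw [sub_bpos]; split_ifs <;> decide

lemma bpos_congr {n : ℕ} {s t : Seq3} {m : ℕ} (h : ∀ i < m, s i = t i) {j : ℕ} (hj : j ≤ m) :
    bpos n s j = bpos n t j := by
  unfold bpos
  apply Finset.sum_congr rfl
  intro i hi
  rw [h i (by simp at hi; omega)]

lemma sub_congr {n : ℕ} {s t : Seq3} {m : ℕ} (h : ∀ i < m, s i = t i) :
    ∀ i < bpos n s m, sub n s i = sub n t i := by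
  intro i hi
  have hk : bidx n s i < m :=
    (bpos_strictMono n s).lt_iff_lt.1 ((bidx_le n s i).trans_lt hi)
  have e1 := bpos_congr (n := n) h hk.le
  have e2 := bpos_congr (n := n) h (j := bidx n s i + 1) hk
  have : bidx n t i = bidx n s i :=
    bidx_eq (by rw [← e1]; exact bidx_le n s i) (by rw [← e2]; exact lt_bidx n s i)
  simp only [sub, this, e1, h _ hk]

lemma bpos_shift (n : ℕ) (t : Seq3) (k j : ℕ) :
    bpos n t k + bpos n (shift^[k] t) j = bpos n t (k + j) := by
  simp only [bpos, Finset.sum_range_add, shift_iter]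

lemma sub_shift (n : ℕ) (t : Seq3) (k : ℕ) :
    shift^[bpos n t k] (sub n t) = sub n (shift^[k] t) := by
  funext m
  rw [shift_iter]
  set j := bidx n (shift^[k] t) m with hj
  have h1 := bidx_le n (shift^[k] t) m
  have h2 := lt_bidx n (shift^[k] t) m
  rw [← hj] at h1 h2
  have e1 := bpos_shift n t k j
  have e2 := bpos_shift n t k (j+1)
  rcases h1.eq_or_lt with h | h
  · rw [← h, sub_bpos, e1, sub_bpos, shift_iter]
  · rw [sub_zero' h h2, sub_zero' (j := k + j) (by omega) (by rw [add_assoc]; omega)]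

/-! ### order -/

def lexLt (s t : Seq3) : Prop := ∃ n, (∀ i, i < n → s i = t i) ∧ s n < t n

lemma lexLe_iff {s t : Seq3} : lexLe s t ↔ s = t ∨ lexLt s t := Iff.rfl

lemma lexLt_irrefl (s : Seq3) : ¬ lexLt s s := fun ⟨_, _, h⟩ => lt_irrefl _ h

lemma lexLt_trans {s t u : Seq3} (h1 : lexLt s t) (h2 : lexLt t u) : lexLt s u := by
  obtain ⟨n, hn, hn'⟩ := h1
  obtain ⟨m, hm, hm'⟩ := h2
  rcases lt_trichotomy n m with h | h | h
  · exact ⟨n, fun i hi => (hn i hi).trans (hm i (hi.trans h)), by rw [← hm n h]; exact hn'⟩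
  · subst h
    exact ⟨n, fun i hi => (hn i hi).trans (hm i hi), hn'.trans hm'⟩
  · exact ⟨m, fun i hi => (hn i (hi.trans h)).trans (hm i hi), by rw [hn m h]; exact hm'⟩

lemma lexLe_refl (s : Seq3) : lexLe s s := Or.inl rfl

lemma lexLe_trans {s t u : Seq3} (h1 : lexLe s t) (h2 : lexLe t u) : lexLe s u := by
  rcases h1 with rfl | h1
  · exact h2
  rcases h2 with rfl | h2
  · exact Or.inr h1
  · exact Or.inr (lexLt_trans h1 h2)

lemma lexLe_or_lt (s t : Seq3) : lexLe s t ∨ lexLt t s := by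
  by_cases h : s = t
  · exact Or.inl (Or.inl h)
  have h' : ∃ n, s n ≠ t n := by
    by_contra hh; push Not at hh; exact h (funext hh)
  classical
  have h1 := Nat.find_spec h'
  have h2 : ∀ i < Nat.find h', s i = t i := fun i hi => not_not.1 (Nat.find_min h' hi)
  rcases lt_or_gt_of_ne h1 with h3 | h3
  · exact Or.inl (Or.inr ⟨_, h2, h3⟩)
  · exact Or.inr ⟨_, fun i hi => (h2 i hi).symm, h3⟩

lemma not_le_of_lexLt {s t : Seq3} (h : lexLt s t) : ¬ lexLe t s := by
  rintro (rfl | h')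
  · exact lexLt_irrefl _ h
  · exact lexLt_irrefl _ (lexLt_trans h h')

lemma lexLe_antisymm {s t : Seq3} (h1 : lexLe s t) (h2 : lexLe t s) : s = t := by
  rcases h1 with h | h
  · exact h
  · exact absurd h2 (not_le_of_lexLt h)

/-- closedness under prefix approximation -/
lemma lexLe_lim {s t : Seq3} (h : ∀ m, ∃ s' t', lexLe s' t' ∧ (∀ i < m, s' i = s i) ∧
    (∀ i < m, t' i = t i)) : lexLe s t := by
  rcases lexLe_or_lt s t with h' | ⟨n, h1, h2⟩
  · exact h'
  obtain ⟨s', t', h3, h4, h5⟩ := h (n+1)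
  exfalso
  refine not_le_of_lexLt (s := t') (t := s') ⟨n, fun i hi => ?_, ?_⟩ h3
  · rw [h4 i (by omega), h5 i (by omega), h1 i hi]
  · rw [h4 n (by omega), h5 n (by omega)]; exact h2

lemma fin3_cases (d : Fin 3) : d = 0 ∨ d = 1 ∨ d = 2 := by
  fin_cases d <;> simp

lemma sub_lt (n : ℕ) {s t : Seq3} (h : lexLt s t) : lexLt (sub n s) (sub n t) := by
  obtain ⟨m, h1, h2⟩ := h
  have hp := bpos_congr (n := n) h1 le_rfl
  have hs := sub_congr (n := n) h1
  have b1 := sub_bpos n s m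
  have b2 := sub_bpos n t m
  rcases fin3_cases (s m) with h3 | h3 | h3
  · refine ⟨bpos n s m, hs, ?_⟩
    rw [b1, hp, b2, if_pos h3, if_neg]
    · decide
    · intro h4; rw [h3, h4] at h2; exact lt_irrefl _ h2
  · have h4 : t m = 2 := by
      rw [h3] at h2; revert h2; rcases fin3_cases (t m) with h | h | h <;> rw [h] <;> decide
    have l1 : bpos n s (m+1) = bpos n s m + (n+2) := by rw [bpos_succ, h3]; simp [blen]
    have l2 : bpos n t (m+1) = bpos n t m + (n+1) := by rw [bpos_succ, h4]; simp [blen]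
    refine ⟨bpos n s m + (n+1), fun i hi => ?_, ?_⟩
    · rcases lt_trichotomy i (bpos n s m) with h5 | h5 | h5
      · exact hs i h5
      · subst h5
        rw [b1, hp, b2, h3, h4]; decide
      · rw [sub_zero' h5 (by omega), sub_zero' (j := m) (by omega) (by omega)]
    · rw [sub_zero' (n := n) (t := s) (j := m) (by omega) (by omega), hp, ← l2]
      exact Fin.pos_iff_ne_zero.2 (sub_bpos_ne n t (m+1))
  · rw [h3] at h2
    exfalso; revert h2; rcases fin3_cases (t m) with h | h | h <;> rw [h] <;> decide

lemma sub_le (n : ℕ) {s t : Seq3} (h : lexLe s t) : lexLe (sub n s) (sub n t) := by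
  rcases h with rfl | h
  · exact lexLe_refl _
  · exact Or.inr (sub_lt n h)

lemma sub_head {n : ℕ} {t : Seq3} (h : t 0 = 2) : sub n t 0 = 2 := by
  have := sub_bpos n t 0
  rw [bpos_zero, h] at this
  simpa using this

lemma sub_max {n : ℕ} {t : Seq3} (h : t ∈ MaxSet) : sub n t ∈ MaxSet := by
  refine ⟨sub_head h.1, fun r => ?_⟩
  by_cases h0 : sub n t r = 0
  · right
    refine ⟨0, by simp, ?_⟩
    rw [shift_iter, sub_head h.1]
    simp [h0]
  · obtain ⟨j, rfl⟩ := sub_ne_zero_ex h0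
    rw [sub_shift]
    exact sub_le n (h.2 j)

/-! ### iterated substitution and its limit -/

def subs : (ℕ → ℕ) → ℕ → Seq3 → Seq3
  | _, 0, x => x
  | n, R+1, x => sub (n 0) (subs (fun i => n (i+1)) R x)

lemma subs_head (n : ℕ → ℕ) (R : ℕ) {x : Seq3} (h : x 0 = 2) : subs n R x 0 = 2 := by
  induction R generalizing n with
  | zero => exact h
  | succ R ih => exact sub_head (ih _)

lemma sub_sub_agree {a b m : ℕ} {x y : Seq3} (h : ∀ i < m, x i = y i) :
    ∀ i < m + 1, sub a (sub b x) i = sub a (sub b y) i := by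
  have h1 : ∀ i < m, sub b x i = sub b y i := fun i hi =>
    sub_congr h i (hi.trans_le (le_bpos _ _ _))
  have h2 : sub b x m = 0 ↔ sub b y m = 0 := by
    rcases (le_bpos b x m).eq_or_lt with h3 | h3
    · have e1 : sub b x m ≠ 0 := by
        have := sub_bpos_ne b x m; rwa [← h3] at this
      have e2 : sub b y m ≠ 0 := by
        have := sub_bpos_ne b y m; rwa [← bpos_congr h le_rfl, ← h3] at this
      simp [e1, e2]
    · rw [sub_congr h m h3]
  intro i hi
  rcases (le_bpos a (sub b x) m).eq_or_lt with h3 | h3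
  · by_cases him : i = m
    · have e1 := sub_bpos a (sub b x) m
      have e2 := sub_bpos a (sub b y) m
      rw [← bpos_congr h1 le_rfl, ← h3] at e2
      rw [← h3] at e1
      subst him
      rw [e1, e2]
      simp only [h2]
    · exact sub_congr h1 i (by omega)
  · exact sub_congr h1 i (by omega)

lemma subs_agree (m : ℕ) : ∀ (n : ℕ → ℕ) (R R' : ℕ) (x y : Seq3), x 0 = 2 → y 0 = 2 → 2 * m ≤ R →
    2 * m ≤ R' → ∀ i < m + 1, subs n R x i = subs n R' y i := by
  induction m with
  | zero =>
    intro n R R' x y hx hy _ _ i hi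
    have : i = 0 := by omega
    subst this
    rw [subs_head n R hx, subs_head n R' hy]
  | succ m ih =>
    intro n R R' x y hx hy hR hR'
    obtain ⟨R, rfl⟩ : ∃ r, R = r + 1 + 1 := ⟨R - 2, by omega⟩
    obtain ⟨R', rfl⟩ : ∃ r, R' = r + 1 + 1 := ⟨R' - 2, by omega⟩
    exact sub_sub_agree (ih _ R R' x y hx hy (by omega) (by omega))

def Lim (n : ℕ → ℕ) : Seq3 := fun m => subs n (2 * m) (fun _ => 2) m

lemma Lim_agree {n : ℕ → ℕ} {m R : ℕ} {x : Seq3} (hx : x 0 = 2) (hR : 2 * m ≤ R) :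
    ∀ i < m + 1, subs n R x i = Lim n i := fun i hi =>
  subs_agree i n R (2*i) x _ hx rfl (by omega) le_rfl i (by omega)

lemma Lim_head (n : ℕ → ℕ) : Lim n 0 = 2 := rfl

lemma Lim_sub (n : ℕ → ℕ) : Lim n = sub (n 0) (Lim (fun i => n (i+1))) := by
  funext m
  rw [← Lim_agree (n := n) (m := m) (R := 2*m+1) (x := fun _ => 2) rfl (by omega) m (by omega)]
  have h := Lim_agree (n := fun i => n (i+1)) (m := m) (R := 2*m) (x := fun _ => 2) rfl le_rfl
  exact sub_congr h m (Nat.lt_of_succ_le (le_bpos _ _ _))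

lemma subs_max (n : ℕ → ℕ) (R : ℕ) {x : Seq3} (h : x ∈ MaxSet) : subs n R x ∈ MaxSet := by
  induction R generalizing n with
  | zero => exact h
  | succ R ih => exact sub_max (ih _)

lemma two_max : (fun _ => 2 : Seq3) ∈ MaxSet := by
  refine ⟨rfl, fun r => Or.inl ?_⟩
  funext i
  rw [shift_iter]

lemma Lim_max (n : ℕ → ℕ) : Lim n ∈ MaxSet := by
  refine ⟨Lim_head n, fun r => lexLe_lim fun m => ?_⟩
  have hx := subs_max n (2 * (m + r)) two_max
  refine ⟨_, _, hx.2 r, fun i hi => ?_, fun i hi => ?_⟩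
  · rw [shift_iter, shift_iter]
    exact Lim_agree (m := m + r) rfl le_rfl _ (by omega)
  · exact Lim_agree (m := m + r) rfl le_rfl _ (by omega)


/-! ### counting -/

noncomputable def C (s : Seq3) (i : Fin 3) (N : ℕ) : ℝ :=
  ∑ j ∈ Finset.range N, if i = s j then (1:ℝ) else 0

lemma C_zero (s : Seq3) (i : Fin 3) : C s i 0 = 0 := by simp [C]

lemma C_succ (s : Seq3) (i : Fin 3) (N : ℕ) :
    C s i (N+1) = C s i N + if i = s N then (1:ℝ) else 0 := by
  exact Finset.sum_range_succ _ _

lemma C_sum (s : Seq3) (N : ℕ) : C s 0 N + C s 1 N + C s 2 N = N := by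
  induction N with
  | zero => simp [C_zero]
  | succ N ih =>
    simp only [C_succ]; push_cast
    rcases fin3_cases (s N) with h | h | h <;> rw [h] <;> simp <;> linarith

lemma C_mono (s : Seq3) (i : Fin 3) : Monotone (C s i) := by
  apply monotone_nat_of_le_succ
  intro N
  rw [C_succ]; split_ifs <;> simp

lemma C_lip (s : Seq3) (i : Fin 3) (N r : ℕ) : C s i (N + r) - C s i N ≤ r := by
  induction r with
  | zero => simp
  | succ r ih =>
    rw [← add_assoc, C_succ]; push_cast
    split_ifs <;> linarith

lemma kappa_shift (s : Seq3) (j : ℕ) (i : Fin 3) :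
    kappa (shift^[j] s) i = if i = s j then (1:ℝ) else 0 := by
  simp [kappa, shift_iter]

lemma hasFreq_C (s : Seq3) (v : Fin 3 → ℝ) : hasFreq s v ↔
    ∀ i, Tendsto (fun N : ℕ => C s i N / N) atTop (𝓝 (v i)) := by
  rw [hasFreq_iff]
  simp only [kappa_shift, C, div_eq_inv_mul]

/-- limits of averages along windows -/
def RotLim (s : Seq3) (k r : ℕ → ℕ) (v : Fin 3 → ℝ) : Prop :=
  Tendsto r atTop atTop ∧
  ∀ i, Tendsto (fun j => (C s i (k j + r j) - C s i (k j)) / (r j : ℝ)) atTop (𝓝 (v i))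

lemma hasFreq_rot {s : Seq3} {v : Fin 3 → ℝ} (h : hasFreq s v) : RotLim s (fun _ => 0) id v := by
  rw [hasFreq_C] at h
  refine ⟨tendsto_id, fun i => ?_⟩
  simpa [C_zero] using h i

lemma rot_delta {s : Seq3} {k r : ℕ → ℕ} {v : Fin 3 → ℝ} (h : RotLim s k r v) : v ∈ Delta := by
  refine ⟨fun i => ?_, ?_⟩
  · refine ge_of_tendsto' (h.2 i) fun j => ?_
    have := C_mono s i (Nat.le_add_right (k j) (r j))
    apply div_nonneg _ (by positivity)
    linarith
  · have h1 := ((h.2 0).add (h.2 1)).add (h.2 2)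
    refine tendsto_nhds_unique h1 (tendsto_const_nhds.congr' ?_)
    filter_upwards [h.1.eventually_gt_atTop 0] with j hj
    have hj' : (0:ℝ) < r j := by exact_mod_cast hj
    have e1 := C_sum s (k j + r j)
    have e2 := C_sum s (k j)
    push_cast at e1
    field_simp
    linarith

lemma freq_delta {s : Seq3} {v : Fin 3 → ℝ} (h : hasFreq s v) : v ∈ Delta :=
  rot_delta (hasFreq_rot h)

lemma C_zeros (s : Seq3) (a : ℕ) (r : ℕ) (h : ∀ m, a < m → m < a + (r+1) → s m = 0) (i : Fin 3) :
    C s i (a + (r + 1)) = C s i a + (if i = s a then 1 else 0) + (if i = 0 then (r:ℝ) else 0) := by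
  induction r with
  | zero => simp [C_succ]
  | succ r ih =>
    rw [← add_assoc, C_succ, ih (fun m h1 h2 => h m h1 (by omega)),
      h (a + (r+1)) (by omega) (by omega)]
    push_cast
    split_ifs <;> ring

lemma C_block (n : ℕ) (t : Seq3) (j : ℕ) (i : Fin 3) :
    C (sub n t) i (bpos n t (j+1)) = C (sub n t) i (bpos n t j) +
      (if i = (if t j = 0 then 1 else 2) then 1 else 0) +
      (if i = 0 then ((blen n (t j) : ℝ) - 1) else 0) := by
  have h0 := blen_pos n (t j)
  obtain ⟨r, hr⟩ : ∃ r, blen n (t j) = r + 1 := ⟨_, (Nat.sub_add_cancel h0).symm⟩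
  have h1 : bpos n t (j+1) = bpos n t j + (r+1) := by rw [bpos_succ, hr]
  rw [h1, C_zeros, sub_bpos, hr]
  · push_cast; simp
  · intro m h2 h3
    exact sub_zero' h2 (by omega)

lemma C_bpos (n : ℕ) (t : Seq3) (a : ℕ) :
    C (sub n t) 1 (bpos n t a) = C t 0 a ∧
    C (sub n t) 2 (bpos n t a) = C t 1 a + C t 2 a ∧
    C (sub n t) 0 (bpos n t a) = (n+1) * C t 1 a + n * C t 2 a := by
  induction a with
  | zero => simp [bpos_zero, C_zero]
  | succ a ih =>
    obtain ⟨h1, h2, h3⟩ := ih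
    simp only [C_block, C_succ, h1, h2, h3]
    rcases fin3_cases (t a) with h | h | h <;> rw [h] <;> simp [blen] <;> (try constructor) <;> ring

lemma C_near (n : ℕ) (t : Seq3) (i : Fin 3) (N : ℕ) :
    |C (sub n t) i N - C (sub n t) i (bpos n t (bidx n t N))| ≤ n + 2 := by
  have h1 := bidx_le n t N
  have h2 := lt_bidx n t N
  rw [bpos_succ] at h2
  have h3 : blen n (t (bidx n t N)) ≤ n + 2 := by unfold blen; split_ifs <;> omega
  obtain ⟨r, hr⟩ := Nat.exists_eq_add_of_le h1
  have h4 := C_mono (sub n t) i h1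
  have h5 := C_lip (sub n t) i (bpos n t (bidx n t N)) r
  rw [← hr] at h5
  have h6 : (r:ℝ) ≤ n + 2 := by exact_mod_cast (by omega : r ≤ n + 2)
  rw [abs_le]; constructor <;> linarith

lemma bidx_mono (n : ℕ) (t : Seq3) : Monotone (bidx n t) := by
  intro a b hab
  have h1 := bidx_le n t a
  have h2 := lt_bidx n t b
  have := (bpos_strictMono n t).lt_iff_lt.1 ((h1.trans hab).trans_lt h2)
  omega

def KRel (n : ℕ) (v u : Fin 3 → ℝ) : Prop :=
  v 0 < 1 ∧ (1 - v 0) * u 0 = v 1 ∧ (1 - v 0) * u 1 = v 0 - n * v 2 ∧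
    (1 - v 0) * u 2 = (n+1) * v 2 - v 0

lemma tendsto_err {f g r : ℕ → ℝ} {K c : ℝ} (hr : Tendsto r atTop atTop)
    (h : ∀ j, |f j - g j| ≤ K) (hg : Tendsto (fun j => g j / r j) atTop (𝓝 c)) :
    Tendsto (fun j => f j / r j) atTop (𝓝 c) := by
  have h0 : Tendsto (fun j => (f j - g j) / r j) atTop (𝓝 0) := by
    have : Tendsto (fun j => K / r j) atTop (𝓝 0) := hr.const_div_atTop K
    refine squeeze_zero_norm' ?_ this
    filter_upwards [hr.eventually_gt_atTop 0] with j hj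
    rw [norm_div, Real.norm_eq_abs, Real.norm_eq_abs, abs_of_pos hj]
    gcongr; exact h j
  have := h0.add hg
  simp only [zero_add] at this
  refine this.congr fun j => ?_
  ring

lemma rot_sub {n : ℕ} {t : Seq3} {k r : ℕ → ℕ} {v : Fin 3 → ℝ} (h : RotLim (sub n t) k r v) :
    ∃ k' r' u, RotLim t k' r' u ∧ KRel n v u := by
  have hd := rot_delta h
  set V := sub n t with hV
  let a : ℕ → ℕ := fun j => bidx n t (k j)
  let b : ℕ → ℕ := fun j => bidx n t (k j + r j)
  have hab : ∀ j, a j ≤ b j := fun j => bidx_mono n t (Nat.le_add_right _ _)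
  have hrr : Tendsto (fun j => (r j : ℝ)) atTop atTop := tendsto_natCast_atTop_atTop.comp h.1
  -- differences on t
  let D : Fin 3 → ℕ → ℝ := fun i j => C t i (b j) - C t i (a j)
  let E : Fin 3 → ℕ → ℝ := fun i j => C V i (k j + r j) - C V i (k j)
  have hE : ∀ i, Tendsto (fun j => E i j / r j) atTop (𝓝 (v i)) := h.2
  have near : ∀ i j, |E i j - (C V i (bpos n t (b j)) - C V i (bpos n t (a j)))| ≤ 2 * (n + 2) := by
    intro i j
    have h1 := C_near n t i (k j)
    have h2 := C_near n t i (k j + r j)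
    rw [abs_le] at *
    simp only [E, a, b]
    constructor <;> linarith
  have n1 : ∀ j, |D 0 j - E 1 j| ≤ 2 * (n+2) := by
    intro j
    have := near 1 j
    rw [(C_bpos n t (a j)).1, (C_bpos n t (b j)).1, abs_sub_comm] at this
    exact this
  have n2 : ∀ j, |(D 1 j + D 2 j) - E 2 j| ≤ 2 * (n+2) := by
    intro j
    have := near 2 j
    rw [(C_bpos n t (a j)).2.1, (C_bpos n t (b j)).2.1, abs_sub_comm] at this
    simp only [D]
    convert this using 2; ring
  have n0 : ∀ j, |((n+1) * D 1 j + n * D 2 j) - E 0 j| ≤ 2 * (n+2) := by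
    intro j
    have := near 0 j
    rw [(C_bpos n t (a j)).2.2, (C_bpos n t (b j)).2.2, abs_sub_comm] at this
    simp only [D]
    convert this using 2; ring
  have t0 : Tendsto (fun j => D 0 j / r j) atTop (𝓝 (v 1)) := tendsto_err hrr n1 (hE 1)
  have t12 : Tendsto (fun j => (D 1 j + D 2 j) / r j) atTop (𝓝 (v 2)) := tendsto_err hrr n2 (hE 2)
  have tz : Tendsto (fun j => ((n+1) * D 1 j + n * D 2 j) / r j) atTop (𝓝 (v 0)) :=
    tendsto_err hrr n0 (hE 0)
  have t1 : Tendsto (fun j => D 1 j / r j) atTop (𝓝 (v 0 - n * v 2)) := by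
    refine (tz.sub (t12.const_mul (n:ℝ))).congr fun j => ?_
    ring
  have t2 : Tendsto (fun j => D 2 j / r j) atTop (𝓝 ((n+1) * v 2 - v 0)) := by
    refine ((t12.const_mul ((n:ℝ)+1)).sub tz).congr fun j => ?_
    ring
  have hs : ∀ j, D 0 j + D 1 j + D 2 j = ((b j - a j : ℕ) : ℝ) := by
    intro j
    have e1 := C_sum t (a j)
    have e2 := C_sum t (b j)
    rw [Nat.cast_sub (hab j)]
    simp only [D]; linarith
  have tr : Tendsto (fun j => ((b j - a j : ℕ) : ℝ) / r j) atTop (𝓝 (1 - v 0)) := by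
    have := (t0.add t1).add t2
    have e : v 1 + (v 0 - n * v 2) + ((n+1) * v 2 - v 0) = 1 - v 0 := by
      have := hd.2; linarith
    rw [e] at this
    refine this.congr fun j => ?_
    rw [← hs]; ring
  have hnn : ∀ i j, 0 ≤ D i j := fun i j => sub_nonneg.2 (C_mono t i (hab j))
  have p2 : 0 ≤ (n+1) * v 2 - v 0 :=
    ge_of_tendsto' t2 fun j => div_nonneg (hnn 2 j) (by positivity)
  have hρ : 0 < 1 - v 0 := by
    have h1 := hd.1 1
    have h2 := hd.1 2
    have h3 := hd.2
    by_contra hcon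
    have : v 2 = 0 := by linarith
    rw [this] at p2
    linarith
  have hr' : Tendsto (fun j => ((b j - a j : ℕ) : ℝ)) atTop atTop := by
    have := tr.pos_mul_atTop hρ hrr
    refine this.congr' ?_
    filter_upwards [hrr.eventually_gt_atTop 0] with j hj
    field_simp
  refine ⟨a, fun j => b j - a j, fun i => (if i = 0 then v 1 else if i = 1 then v 0 - n * v 2 else
    (n+1) * v 2 - v 0) / (1 - v 0), ⟨?_, ?_⟩, ?_⟩
  · exact tendsto_natCast_atTop_iff.1 hr'
  · intro i
    have key : ∀ x, Tendsto (fun j => D i j / r j) atTop (𝓝 x) →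
        Tendsto (fun j => (C t i (a j + (b j - a j)) - C t i (a j)) / ((b j - a j : ℕ) : ℝ)) atTop
          (𝓝 (x / (1 - v 0))) := by
      intro x hx
      refine (hx.div tr hρ.ne').congr' ?_
      filter_upwards [hrr.eventually_gt_atTop 0] with j hj
      rw [Nat.add_sub_cancel' (hab j)]
      simp only [Pi.div_apply]
      rw [div_div_div_cancel_right₀ hj.ne']
    rcases fin3_cases i with rfl | rfl | rfl
    · simpa using key _ t0
    · simpa using key _ t1
    · simpa using key _ t2
  · refine ⟨by linarith, ?_, ?_, ?_⟩ <;> simp <;> field_simp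

/-- frequencies push forward -/
lemma freq_sub {n : ℕ} {t : Seq3} {v u : Fin 3 → ℝ} (h : hasFreq t u) (hv : v ∈ Delta)
    (hR : KRel n v u) : hasFreq (sub n t) v := by
  obtain ⟨hv0, e0, e1, e2⟩ := hR
  rw [hasFreq_C] at h ⊢
  let a : ℕ → ℕ := bidx n t
  have ha : Tendsto a atTop atTop := by
    refine tendsto_atTop_mono' _ (f₁ := fun N => N / (n+2) - 1) ?_ ?_
    · filter_upwards with N
      have h2 := lt_bidx n t N
      have h3 : bpos n t (bidx n t N + 1) ≤ (bidx n t N + 1) * (n+2) := by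
        unfold bpos
        refine (Finset.sum_le_card_nsmul _ _ (n+2) ?_).trans ?_
        · intro x _; unfold blen; split_ifs <;> omega
        · simp
      have : N / (n+2) < bidx n t N + 1 := by
        rw [Nat.div_lt_iff_lt_mul (by omega)]; omega
      simp only [a]; omega
    · exact (tendsto_sub_atTop_nat 1).comp (Nat.tendsto_div_const_atTop (by omega))
  have har : Tendsto (fun N => (a N : ℝ)) atTop atTop := tendsto_natCast_atTop_atTop.comp ha
  have hC : ∀ i, Tendsto (fun N => C t i (a N) / a N) atTop (𝓝 (u i)) := fun i => (h i).comp ha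
  let ρ := 1 - v 0
  have hρ : 0 < ρ := by simp only [ρ]; linarith
  have s1 : Tendsto (fun N => C (sub n t) 1 N / a N) atTop (𝓝 (v 1 / ρ)) := by
    refine tendsto_err har (C_near n t 1) ?_
    have : v 1 / ρ = u 0 := by rw [div_eq_iff hρ.ne', ← e0]; simp only [ρ]; ring
    rw [this]
    simpa only [(C_bpos n t _).1] using hC 0
  have s2 : Tendsto (fun N => C (sub n t) 2 N / a N) atTop (𝓝 (v 2 / ρ)) := by
    refine tendsto_err har (C_near n t 2) ?_
    have : v 2 / ρ = u 1 + u 2 := by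
      rw [div_eq_iff hρ.ne']; simp only [ρ]; linarith
    rw [this]
    simp only [(C_bpos n t _).2.1, add_div]
    exact (hC 1).add (hC 2)
  have s0 : Tendsto (fun N => C (sub n t) 0 N / a N) atTop (𝓝 (v 0 / ρ)) := by
    refine tendsto_err har (C_near n t 0) ?_
    have : v 0 / ρ = (n+1) * u 1 + n * u 2 := by
      rw [div_eq_iff hρ.ne']; simp only [ρ]
      linear_combination (-(n:ℝ)-1) * e1 - n * e2
    rw [this]
    simp only [(C_bpos n t _).2.2, add_div, mul_div_assoc]
    exact ((hC 1).const_mul _).add ((hC 2).const_mul _)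
  have sN : Tendsto (fun N : ℕ => (N:ℝ) / a N) atTop (𝓝 (1 / ρ)) := by
    have := (s0.add s1).add s2
    have e : v 0 / ρ + v 1 / ρ + v 2 / ρ = 1 / ρ := by
      rw [← add_div, ← add_div, hv.2]
    rw [e] at this
    refine this.congr fun N => ?_
    rw [← C_sum (sub n t) N]; ring
  intro i
  have key : Tendsto (fun N => C (sub n t) i N / a N) atTop (𝓝 (v i / ρ)) := by
    rcases fin3_cases i with rfl | rfl | rfl
    exacts [s0, s1, s2]
  have := key.div sN (by positivity)
  rw [div_div_div_cancel_right₀ hρ.ne', div_one] at this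
  refine this.congr' ?_
  filter_upwards [har.eventually_gt_atTop 0] with N hN
  simp only [Pi.div_apply]
  rw [div_div_div_cancel_right₀ hN.ne']


/-! ### existence of maximal sequences with given frequency -/

lemma C_shift (s : Seq3) (k : ℕ) (i : Fin 3) (N : ℕ) :
    C (shift^[k] s) i N = C s i (k + N) - C s i k := by
  induction N with
  | zero => simp [C_zero]
  | succ N ih => rw [C_succ, ih, ← add_assoc, C_succ, shift_iter]; ring

lemma freq_of_shift {s : Seq3} {v : Fin 3 → ℝ} (k : ℕ) (h : hasFreq (shift^[k] s) v) :
    hasFreq s v := by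
  rw [hasFreq_C] at *
  intro i
  refine tendsto_err (K := k) tendsto_natCast_atTop_atTop (fun N => ?_) (h i)
  rw [C_shift]
  have h1 := C_lip s i N k
  have h2 := C_mono s i (Nat.le_add_right N k)
  have h3 := C_lip s i 0 k
  have h4 := C_mono s i (Nat.zero_le k)
  rw [zero_add] at h3
  rw [C_zero] at h3 h4
  rw [add_comm k N, abs_le]
  constructor <;> linarith

lemma freq_of_err {s : Seq3} {v : Fin 3 → ℝ} (hv : v ∈ Delta) (K : ℝ)
    (h0 : ∀ N : ℕ, |C s 0 N - N * v 0| ≤ K) (h2 : ∀ N : ℕ, |C s 2 N - N * v 2| ≤ K) :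
    hasFreq s v := by
  rw [hasFreq_C]
  have key : ∀ i, ∀ K' : ℝ, (∀ N : ℕ, |C s i N - N * v i| ≤ K') →
      Tendsto (fun N : ℕ => C s i N / N) atTop (𝓝 (v i)) := by
    intro i K' h
    refine tendsto_err tendsto_natCast_atTop_atTop h (tendsto_const_nhds.congr' ?_)
    filter_upwards [eventually_gt_atTop 0] with N hN
    have : (N:ℝ) ≠ 0 := by exact_mod_cast hN.ne'
    field_simp
  intro i
  rcases fin3_cases i with rfl | rfl | rfl
  · exact key _ _ h0
  · refine key _ (2*K) fun N => ?_
    have e := C_sum s N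
    have e' : v 1 = 1 - v 0 - v 2 := by have := hv.2; linarith
    have a := h0 N
    have b := h2 N
    rw [abs_le] at *
    rw [e']
    constructor <;> nlinarith
  · exact key _ _ h2

lemma floor_step_s17 {β : ℝ} (h0 : 0 ≤ β) (h1 : β ≤ 1) (N : ℕ) :
    ⌊((N+1 : ℕ):ℝ) * β⌋₊ = ⌊(N:ℝ) * β⌋₊ ∨ ⌊((N+1 : ℕ):ℝ) * β⌋₊ = ⌊(N:ℝ) * β⌋₊ + 1 := by
  have a : ⌊(N:ℝ) * β⌋₊ ≤ ⌊((N+1 : ℕ):ℝ) * β⌋₊ := by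
    apply Nat.floor_le_floor; push_cast; nlinarith
  have b : ⌊((N+1 : ℕ):ℝ) * β⌋₊ < ⌊(N:ℝ) * β⌋₊ + 1 + 1 := by
    rw [Nat.floor_lt (by positivity)]
    have := Nat.lt_floor_add_one ((N:ℝ) * β)
    push_cast; nlinarith
  omega

lemma floor_err {x : ℝ} (hx : 0 ≤ x) : |(⌊x⌋₊ : ℝ) - x| ≤ 1 := by
  have h1 := Nat.floor_le hx
  have h2 := Nat.lt_floor_add_one x
  rw [abs_le]; constructor <;> linarith

lemma exists_max_s17 {α : Fin 3 → ℝ} (hα : α ∈ Delta') : ∃ w ∈ MaxSet, hasFreq w α := by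
  obtain ⟨hd, h2⟩ := hα
  have p0 := hd.1 0
  have p1 := hd.1 1
  have hsum := hd.2
  by_cases h1 : α 2 = 1
  · refine ⟨fun _ => 2, two_max, freq_of_err hd 0 ?_ ?_⟩
    · intro N
      have : α 0 = 0 := by linarith
      simp [C, this]
    · intro N
      simp [C, h1]
  have hlt : α 2 < 1 := lt_of_le_of_ne (by linarith) h1
  set β := α 2 with hβ
  set p := α 0 / (1 - β) with hp
  have hp0 : 0 ≤ p := div_nonneg p0 (by linarith)
  have hp1 : p ≤ 1 := by rw [hp, div_le_one (by linarith)]; linarith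
  let f : ℕ → ℕ := fun N => ⌊(N:ℝ) * β⌋₊
  let g : ℕ → ℕ := fun N => ⌊(N:ℝ) * p⌋₊
  have fs : ∀ N, f (N+1) = f N ∨ f (N+1) = f N + 1 := floor_step_s17 h2.le hlt.le
  have gs : ∀ N, g (N+1) = g N ∨ g (N+1) = g N + 1 := floor_step_s17 hp0 hp1
  have f0 : f 0 = 0 := by simp [f]
  have g0 : g 0 = 0 := by simp [g]
  have fle : ∀ N, f N ≤ N := by
    intro N
    induction N with
    | zero => simp [f0]
    | succ N ih => rcases fs N with h | h <;> omega
  let u : Seq3 := fun i => if f (i+1) = f i + 1 then 2 else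
    if g (i - f i + 1) = g (i - f i) + 1 then 0 else 1
  have u2 : ∀ i, u i = 2 ↔ f (i+1) = f i + 1 := by
    intro i
    simp only [u]
    by_cases h : f (i+1) = f i + 1
    · simp [h]
    · by_cases h' : g (i - f i + 1) = g (i - f i) + 1 <;> simp [h, h']
  have cnt : ∀ N, C u 2 N = f N ∧ C u 0 N = g (N - f N) := by
    intro N
    induction N with
    | zero => simp [C_zero, f0, g0]
    | succ N ih =>
      rw [C_succ, C_succ, ih.1, ih.2]
      have hf := fle N
      by_cases h : f (N+1) = f N + 1
      · have hu : u N = 2 := (u2 N).2 h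
        rw [hu, h]
        have : N + 1 - (f N + 1) = N - f N := by omega
        rw [this]
        simp
      · have h' : f (N+1) = f N := by rcases fs N with h3 | h3 <;> [exact h3; exact absurd h3 h]
        have : N + 1 - f N = N - f N + 1 := by omega
        rw [h', this]
        by_cases h4 : g (N - f N + 1) = g (N - f N) + 1
        · have hu : u N = 0 := by simp only [u, if_neg h, if_pos h4]
          rw [hu, h4]; simp
        · have hu : u N = 1 := by simp only [u, if_neg h, if_neg h4]
          have h5 := (gs (N - f N)).resolve_right h4
          rw [hu, h5]; simp
  have hu : hasFreq u α := by
    have e2 : ∀ N : ℕ, |(f N : ℝ) - N * β| ≤ 1 := fun N => floor_err (by positivity)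
    refine freq_of_err hd 2 (fun N => ?_) (fun N => ?_)
    · rw [(cnt N).2]
      have e1 : |(g (N - f N) : ℝ) - ((N - f N : ℕ):ℝ) * p| ≤ 1 := floor_err (by positivity)
      rw [Nat.cast_sub (fle N)] at e1
      have e3 := e2 N
      have e4 : α 0 = (1 - β) * p := by rw [hp]; field_simp [(by linarith : 1 - β ≠ 0)]
      rw [e4]
      rw [abs_le] at *
      constructor <;> nlinarith
    · rw [(cnt N).1]; exact (e2 N).trans (by norm_num)
  obtain ⟨K, hK⟩ := exists_nat_gt (1 / (1 - β))
  have hK' : 1 < K * (1 - β) := by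
    rwa [div_lt_iff₀ (by linarith)] at hK
  have run : ∀ i, ∃ j ≤ K, u (i+j) ≠ 2 := by
    intro i
    by_contra hcon
    push Not at hcon
    have : ∀ j ≤ K + 1, f (i + j) = f i + j := by
      intro j
      induction j with
      | zero => simp
      | succ j ih =>
        intro hj
        have := (u2 (i+j)).1 (hcon j (by omega))
        rw [← add_assoc, this, ih (by omega)]; omega
    have h3 := this K (by omega)
    have h4 : (f (i + K) : ℝ) ≤ ((i + K : ℕ):ℝ) * β := Nat.floor_le (by positivity)
    have h5 : (i:ℝ) * β < f i + 1 := Nat.lt_floor_add_one _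
    rw [h3] at h4; push_cast at h4
    nlinarith
  have u0 : u 0 ≠ 2 := by
    intro h
    have := (u2 0).1 h
    have h4 : (f (0+1) : ℝ) ≤ ((0+1 : ℕ):ℝ) * β := Nat.floor_le (by positivity)
    rw [this, f0] at h4; push_cast at h4
    linarith
  let w : Seq3 := fun i => if i < K + 1 then 2 else u (i - (K+1))
  have hw : shift^[K+1] w = u := by
    funext i
    rw [shift_iter]
    simp only [w, if_neg (by omega : ¬ K + 1 + i < K + 1)]
    congr 1; omega
  refine ⟨w, ⟨by simp [w], fun r => ?_⟩, freq_of_shift (K+1) (by rw [hw]; exact hu)⟩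
  rcases Nat.eq_zero_or_pos r with hr | hr
  · subst hr; exact Or.inl rfl
  have hex : ∃ j, j ≤ K ∧ w (r + j) ≠ 2 := by
    by_cases hrK : r < K + 1
    · refine ⟨K + 1 - r, by omega, ?_⟩
      have : r + (K + 1 - r) = K + 1 := by omega
      rw [this]; simpa [w] using u0
    · obtain ⟨j, hj, hj'⟩ := run (r - (K+1))
      refine ⟨j, hj, ?_⟩
      have e : r + j - (K + 1) = r - (K+1) + j := by omega
      simp only [w, if_neg (by omega : ¬ r + j < K + 1), e]
      exact hj'
  classical
  obtain ⟨a, b⟩ := Nat.find_spec hex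
  right
  refine ⟨Nat.find hex, fun i hi => ?_, ?_⟩
  · have := Nat.find_min hex hi
    rw [shift_iter]
    have h3 : w (r + i) = 2 := by
      by_contra h; exact this ⟨by omega, h⟩
    rw [h3]; simp only [w, if_pos (by omega : i < K + 1)]
  · rw [shift_iter]
    have : w (Nat.find hex) = 2 := by simp only [w, if_pos (by omega : Nat.find hex < K + 1)]
    rw [this]
    revert b
    rcases fin3_cases (w (r + Nat.find hex)) with h | h | h <;> rw [h] <;> simp


lemma exists_min_from {h : ℕ → ℤ} (hh : Tendsto h atTop atTop) :
    ∃ m : ℕ → ℤ, ∀ N, (∃ j ≥ N, m N = h j) ∧ ∀ j ≥ N, m N ≤ h j := by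
  have : ∀ N, ∃ j ≥ N, ∀ i ≥ N, h j ≤ h i := by
    intro N
    have h1 : Tendsto (fun j => h (j + N)) cofinite atTop := by
      rw [Nat.cofinite_eq_atTop]
      exact (tendsto_add_atTop_iff_nat N).2 hh
    obtain ⟨a, ha⟩ := h1.exists_forall_le
    refine ⟨a + N, by omega, fun i hi => ?_⟩
    have := ha (i - N)
    rwa [Nat.sub_add_cancel hi] at this
  choose f hf1 hf2 using this
  exact ⟨fun N => h (f N), fun N => ⟨⟨f N, hf1 N, rfl⟩, hf2 N⟩⟩

lemma min_from_freq {h m : ℕ → ℤ} {c : ℝ} (hc : 0 < c)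
    (hh : Tendsto (fun N : ℕ => (h N : ℝ) / N) atTop (𝓝 c))
    (hm : ∀ N, (∃ j ≥ N, m N = h j) ∧ ∀ j ≥ N, m N ≤ h j) :
    Tendsto (fun N : ℕ => (m N : ℝ) / N) atTop (𝓝 c) := by
  rw [tendsto_order] at hh ⊢
  refine ⟨fun a ha => ?_, fun a ha => ?_⟩
  · have hc' : max ((a + c)/2) (c/2) < c := max_lt (by linarith) (by linarith)
    have hp : 0 < max ((a + c)/2) (c/2) := lt_of_lt_of_le (by linarith) (le_max_right _ _)
    have hgt : a < max ((a + c)/2) (c/2) := lt_of_lt_of_le (by linarith) (le_max_left _ _)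
    obtain ⟨N0, hN0⟩ := eventually_atTop.1 (hh.1 _ hc')
    filter_upwards [eventually_ge_atTop (max N0 1)] with N hN
    obtain ⟨⟨j, hj, e⟩, -⟩ := hm N
    have h1 := hN0 j (by omega)
    have hN' : (0:ℝ) < N := by exact_mod_cast (by omega : 0 < N)
    have hj' : (N:ℝ) ≤ j := by exact_mod_cast hj
    rw [lt_div_iff₀ (by linarith)] at h1
    rw [e, lt_div_iff₀ hN']
    nlinarith
  · filter_upwards [hh.2 a ha, eventually_ge_atTop 1] with N hN h1
    have hN' : (0:ℝ) < N := by exact_mod_cast (by omega : 0 < N)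
    have : (m N : ℝ) ≤ h N := by exact_mod_cast (hm N).2 N le_rfl
    refine lt_of_le_of_lt ?_ hN
    gcongr

lemma step_lower {n : ℕ} {s : Seq3} {α β : Fin 3 → ℝ} (hs : hasFreq s α) (hK : KRel n α β)
    (hβ : 0 < β 2) (hz : ∀ i, s i = 2 → ∀ m, 1 ≤ m → m ≤ n → s (i + m) = 0) :
    ∃ v, hasFreq v β ∧ ∀ k, v k = 2 → ∃ i, lexLe (sub n (shift^[k] v)) (shift^[i] s) := by
  classical
  have hd := freq_delta hs
  obtain ⟨hα0, e0, e1, e2⟩ := hK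
  rw [hasFreq_C] at hs
  let x : Fin 3 → ℤ := fun d => if d = 2 then n + 1 else if d = 0 then -1 else 0
  let h : ℕ → ℤ := fun N => ∑ i ∈ Finset.range N, x (s i)
  have hsucc : ∀ N, h (N+1) = h N + x (s N) := fun N => Finset.sum_range_succ _ _
  have hC : ∀ N, (h N : ℝ) = (n+1) * C s 2 N - C s 0 N := by
    intro N
    induction N with
    | zero => simp [h, C_zero]
    | succ N ih =>
      rw [hsucc, C_succ, C_succ]; push_cast; rw [ih]
      rcases fin3_cases (s N) with h | h | h <;> rw [h] <;> simp [x] <;> ring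
  set c : ℝ := (n+1) * α 2 - α 0 with hcdef
  have hc : 0 < c := by rw [← e2]; exact mul_pos (by linarith) hβ
  have hfreq : Tendsto (fun N : ℕ => (h N : ℝ) / N) atTop (𝓝 c) := by
    have := ((hs 2).const_mul ((n:ℝ)+1)).sub (hs 0)
    refine this.congr fun N => ?_
    rw [hC]; ring
  have hinf : Tendsto h atTop atTop := by
    have h1 : Tendsto (fun N : ℕ => (h N : ℝ)) atTop atTop := by
      have := hfreq.pos_mul_atTop hc (tendsto_natCast_atTop_atTop (R := ℝ))
      refine this.congr' ?_
      filter_upwards [eventually_ge_atTop 1] with N hN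
      have : (N:ℝ) ≠ 0 := by positivity
      field_simp
    exact tendsto_intCast_atTop_iff.1 h1
  obtain ⟨m, hm⟩ := exists_min_from hinf
  have hmf := min_from_freq hc hfreq hm
  let ty : ℕ → Prop := fun i => s i = 2 ∧ ∀ j > i, h i < h j
  have hty : ∀ N, ty N → m N = h N := by
    intro N hN
    obtain ⟨⟨j, hj, e⟩, h2⟩ := hm N
    have h3 := h2 N le_rfl
    rcases hj.lt_or_eq with h4 | h4
    · have := hN.2 j h4; omega
    · rw [e, ← h4]
  have hmle : ∀ N, m N ≤ m (N+1) := by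
    intro N
    obtain ⟨⟨j, hj, e⟩, -⟩ := hm (N+1)
    rw [e]; exact (hm N).2 j (by omega)
  have hms : ∀ N, m (N+1) = m N + if ty N then 1 else 0 := by
    intro N
    split_ifs with hN
    · have h1 := hty N hN
      have h2 : h (N + 1 + n) = h N + 1 := by
        have : ∀ r ≤ n, h (N + 1 + r) = h N + (n + 1) - r := by
          intro r
          induction r with
          | zero => intro _; simp only [add_zero, hsucc, hN.1, x]; simp
          | succ r ih =>
            intro hr
            rw [← add_assoc, hsucc, ih (by omega)]
            have := hz N hN.1 (1 + r) (by omega) (by omega)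
            rw [← add_assoc] at this
            rw [this]; simp [x]; ring
        rw [this n le_rfl]; ring
      obtain ⟨⟨j, hj, e⟩, h3⟩ := hm (N+1)
      have h4 := h3 (N+1+n) (by omega)
      have h5 := hN.2 j (by omega)
      omega
    · have h1 : ∃ j > N, h j ≤ h N := by
        rcases fin3_cases (s N) with hh | hh | hh
        · exact ⟨N+1, by omega, by rw [hsucc, hh]; simp [x]⟩
        · exact ⟨N+1, by omega, by rw [hsucc, hh]; simp [x]⟩
        · by_contra hcon
          push Not at hcon
          exact hN ⟨hh, hcon⟩
      obtain ⟨j, hj, hj'⟩ := h1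
      obtain ⟨⟨j', hj1, e⟩, h3⟩ := hm N
      have h4 := (hm (N+1)).2 j (by omega)
      have h6 := hmle N
      rcases hj1.lt_or_eq with h5 | h5
      · have := (hm (N+1)).2 j' (by omega); omega
      · subst h5; omega
  let P : ℕ → Prop := fun i => s i ≠ 0
  let v : Seq3 := fun k => if s (Nat.nth P k) = 1 then 0 else if ty (Nat.nth P k) then 2 else 1
  have vcount : ∀ i, s i ≠ 0 → v (Nat.count P i) = if s i = 1 then 0 else if ty i then 2 else 1 := by
    intro i hi
    have : Nat.nth P (Nat.count P i) = i := Nat.nth_count (p := P) hi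
    simp only [v, this]
  have hcnt : ∀ N, C v 0 (Nat.count P N) = C s 1 N ∧ C v 2 (Nat.count P N) = (m N - m 0 : ℤ) ∧
      (Nat.count P N : ℝ) = C s 1 N + C s 2 N := by
    intro N
    induction N with
    | zero => simp [C_zero]
    | succ N ih =>
      obtain ⟨i1, i2, i3⟩ := ih
      rw [Nat.count_succ, hms]
      by_cases hN : s N = 0
      · have hP : ¬ P N := fun h => h hN
        have ht : ¬ ty N := fun h => by have := h.1; rw [hN] at this; exact absurd this (by decide)
        simp only [if_neg hP, if_neg ht, add_zero, C_succ, hN, i1, i2, i3]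
        simp
      · have hP : P N := hN
        simp only [if_pos hP, C_succ, vcount N hN, i1, i2]
        push_cast
        rw [i3]
        by_cases h1 : s N = 1
        · have ht : ¬ ty N := fun h => by have := h.1; rw [h1] at this; exact absurd this (by decide)
          simp [h1, ht]; ring
        · have h2 : s N = 2 := by rcases fin3_cases (s N) with h | h | h <;> simp_all
          have g1 : ¬ (1 : Fin 3) = s N := fun h => h1 h.symm
          have g2 : (2 : Fin 3) = s N := h2.symm
          by_cases ht : ty N
          · simp only [if_pos ht, if_neg h1, if_neg g1, if_pos g2]
            refine ⟨by simp, by simp; ring, by ring⟩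
          · simp only [if_neg ht, if_neg h1, if_neg g1, if_pos g2]
            refine ⟨by simp, by simp, by ring⟩
  -- infinitude
  have hPfreq : Tendsto (fun N : ℕ => (Nat.count P N : ℝ) / N) atTop (𝓝 (1 - α 0)) := by
    have := (hs 1).add (hs 2)
    rw [show 1 - α 0 = α 1 + α 2 by have := hd.2; linarith]
    refine this.congr fun N => ?_
    rw [(hcnt N).2.2]; ring
  have hPinf : (Set.ofPred P).Infinite := by
    intro hfin
    have hb : ∃ B : ℕ, ∀ N, Nat.count P N ≤ B := by
      refine ⟨hfin.toFinset.card, fun N => ?_⟩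
      rw [Nat.count_eq_card_filter_range]
      apply Finset.card_le_card
      intro a ha
      simp at ha
      simpa using ha.2
    obtain ⟨B, hB⟩ := hb
    have h0 : Tendsto (fun N : ℕ => (Nat.count P N : ℝ) / N) atTop (𝓝 0) := by
      refine squeeze_zero (fun N => by positivity) (fun N => ?_)
        ((tendsto_natCast_atTop_atTop (R := ℝ)).const_div_atTop (B:ℝ))
      gcongr; exact hB N
    have := tendsto_nhds_unique hPfreq h0
    linarith
  have hnth : Tendsto (Nat.nth P) atTop atTop := (Nat.nth_strictMono hPinf).tendsto_atTop
  have hcn : ∀ k, Nat.count P (Nat.nth P k) = k := Nat.count_nth_of_infinite hPinf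
  have hv : hasFreq v β := by
    have g1 : Tendsto (fun k : ℕ => (k:ℝ) / (Nat.nth P k : ℝ)) atTop (𝓝 (1 - α 0)) := by
      refine (hPfreq.comp hnth).congr fun k => ?_
      simp [hcn]
    have conv : ∀ (f : ℕ → ℝ) (a : ℝ), Tendsto (fun k : ℕ => f k / (Nat.nth P k : ℝ)) atTop (𝓝 a) →
        Tendsto (fun k : ℕ => f k / k) atTop (𝓝 (a / (1 - α 0))) := by
      intro f a hf
      refine (hf.div g1 (by linarith)).congr' ?_
      filter_upwards [eventually_ge_atTop 1] with k hk
      have h1 : (0:ℝ) < k := by exact_mod_cast hk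
      have h2 : (0:ℝ) < Nat.nth P k := by
        have : k ≤ Nat.nth P k := (Nat.nth_strictMono hPinf).le_apply
        exact_mod_cast (by omega : 0 < Nat.nth P k)
      simp only [Pi.div_apply]
      field_simp
    have f0 : Tendsto (fun k : ℕ => C v 0 k / k) atTop (𝓝 (β 0)) := by
      have : β 0 = α 1 / (1 - α 0) := by rw [eq_div_iff (by linarith)]; linarith
      rw [this]
      apply conv
      refine ((hs 1).comp hnth).congr fun k => ?_
      simp only [Function.comp]
      rw [← (hcnt (Nat.nth P k)).1, hcn]
    have f2 : Tendsto (fun k : ℕ => C v 2 k / k) atTop (𝓝 (β 2)) := by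
      have : β 2 = c / (1 - α 0) := by rw [eq_div_iff (by linarith)]; linarith
      rw [this]
      apply conv
      have hh : Tendsto (fun N : ℕ => ((m N - m 0 : ℤ):ℝ) / N) atTop (𝓝 c) := by
        have := hmf.sub ((tendsto_natCast_atTop_atTop (R := ℝ)).const_div_atTop (m 0:ℝ))
        rw [sub_zero] at this
        refine this.congr fun N => ?_
        push_cast; ring
      refine (hh.comp hnth).congr fun k => ?_
      simp only [Function.comp]
      rw [← (hcnt (Nat.nth P k)).2.1, hcn]
    have f1 : Tendsto (fun k : ℕ => C v 1 k / k) atTop (𝓝 (β 1)) := by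
      have hb : β 1 = 1 - β 0 - β 2 := by
        have h1 : 1 - α 0 ≠ 0 := by linarith
        apply mul_left_cancel₀ h1
        have := hd.2
        linear_combination e0 + e1 + e2 + this
      rw [hb]
      refine ((f0.const_sub 1).sub f2).congr' ?_
      filter_upwards [eventually_ge_atTop 1] with k hk
      have h1 : (0:ℝ) < k := by exact_mod_cast hk
      have := C_sum v k
      field_simp
      linarith
    rw [hasFreq_C]
    intro i
    fin_cases i
    exacts [f0, f1, f2]
  refine ⟨v, hv, fun k hk => ⟨Nat.nth P k, ?_⟩⟩
  set i := Nat.nth P k with hi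
  set t := shift^[k] v with ht
  have hsi : s i ≠ 0 := Nat.nth_mem_of_infinite hPinf k
  have htyi : ty i := by
    have := vcount i hsi
    rw [hcn, hk] at this
    by_contra hcon
    split_ifs at this <;> exact absurd this (by decide)
  rcases lexLe_or_lt (sub n t) (shift^[i] s) with hle | ⟨d, hd1, hd2⟩
  · exact hle
  exfalso
  have hTd : sub n t d ≠ 0 := by
    intro h0; rw [h0] at hd2; exact absurd hd2 (by simp)
  obtain ⟨b, hb⟩ := sub_ne_zero_ex hTd
  have hagree : ∀ e, C s e (i + d) - C s e i = C (sub n t) e d := by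
    intro e
    rw [← C_shift]
    unfold C
    apply Finset.sum_congr rfl
    intro j hj
    rw [hd1 j (Finset.mem_range.1 hj)]
  obtain ⟨b1, b2, b3⟩ := C_bpos n t b
  rw [hb] at b1 b2 b3
  have hcount : Nat.count P (i + d) = k + b := by
    have h1 := (hcnt (i+d)).2.2
    have h2 := (hcnt i).2.2
    rw [hcn] at h2
    have h3 := hagree 1
    have h4 := hagree 2
    have h5 := C_sum t b
    have : (Nat.count P (i + d) : ℝ) = ((k + b : ℕ) : ℝ) := by
      push_cast; linarith
    exact_mod_cast this
  have hmh : m (i + d) = h (i + d) := by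
    have h1 := (hcnt (i+d)).2.1
    have h2 := (hcnt i).2.1
    rw [hcn] at h2
    rw [hcount] at h1
    have h3 : C t 2 b = C v 2 (k + b) - C v 2 k := C_shift v k 2 b
    have h4 := hty i htyi
    have h5 := hC (i+d)
    have h6 := hC i
    have h7 := hagree 0
    have h8 := hagree 2
    have : (m (i+d) : ℝ) = h (i+d) := by
      have h4' : (m i : ℝ) = h i := by exact_mod_cast h4
      push_cast at h1 h2
      have h9 : C s 0 (i+d) = C s 0 i + ((n+1) * C t 1 b + n * C t 2 b) := by linarith
      have h10 : C s 2 (i+d) = C s 2 i + (C t 1 b + C t 2 b) := by linarith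
      rw [h5, h9, h10]
      linear_combination h2 - h1 - h3 + h4' + h6
    exact_mod_cast this
  rw [shift_iter] at hd2
  rcases fin3_cases (s (i + d)) with h0 | h0 | h0
  · have h1 := (hm (i+d)).2 (i+d+1) (by omega)
    rw [hsucc, h0, hmh] at h1
    simp [x] at h1
  · have h1 := vcount (i+d) (by rw [h0]; decide)
    rw [hcount, if_pos h0] at h1
    have h2 := sub_bpos n t b
    rw [hb] at h2
    have h3 : t b = 0 := by rw [ht, shift_iter]; exact h1
    rw [if_pos h3] at h2
    rw [h2, h0] at hd2
    exact lt_irrefl _ hd2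
  · rw [h0] at hd2
    revert hd2
    generalize sub n t d = q
    intro hd2
    have : q ≤ 2 := Fin.le_last q
    exact absurd hd2 (not_lt.2 this)


def Chain (n : ℕ → ℕ) (b : ℕ → Fin 3 → ℝ) : Prop :=
  ∀ r, b r ∈ Delta' ∧ KRel (n r) (b r) (b (r+1))

lemma Chain.tail {n : ℕ → ℕ} {b : ℕ → Fin 3 → ℝ} (h : Chain n b) :
    Chain (fun i => n (i+1)) (fun i => b (i+1)) := fun r => h (r+1)

lemma exists_two {s : Seq3} {v : Fin 3 → ℝ} (h : hasFreq s v) (hv : 0 < v 2) : ∃ k, s k = 2 := by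
  by_contra hcon
  push Not at hcon
  rw [hasFreq_C] at h
  have h0 : ∀ N, C s 2 N = 0 := by
    intro N
    unfold C
    apply Finset.sum_eq_zero
    intro j _
    rw [if_neg (fun e => hcon j e.symm)]
  have := h 2
  simp only [h0, zero_div] at this
  have := tendsto_nhds_unique this tendsto_const_nhds
  linarith

lemma lower_claim (R : ℕ) : ∀ (n : ℕ → ℕ) (b : ℕ → Fin 3 → ℝ) (_ : Chain n b) (s : Seq3)
    (_ : hasFreq s (b 0)), ∃ k x, x 0 = 2 ∧ lexLe (subs n R x) (shift^[k] s) := by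
  induction R with
  | zero =>
    intro n b hb s hs
    obtain ⟨k, hk⟩ := exists_two hs (hb 0).1.2
    exact ⟨k, shift^[k] s, by rw [shift_iter]; exact hk, lexLe_refl _⟩
  | succ R ih =>
    intro n b hb s hs
    by_cases hz : ∀ i, s i = 2 → ∀ m, 1 ≤ m → m ≤ n 0 → s (i + m) = 0
    · obtain ⟨v, hv, hv2⟩ := step_lower hs (hb 0).2 (hb 1).1.2 hz
      obtain ⟨k, x, hx, hle⟩ := ih _ _ hb.tail v hv
      have h0 := subs_head (fun i => n (i+1)) R hx
      have hvk : v k = 2 := by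
        have : (2 : Fin 3) ≤ (shift^[k] v) 0 := by
          rcases hle with e | ⟨d, h1, h2⟩
          · rw [← e, h0]
          · rcases Nat.eq_zero_or_pos d with hd | hd
            · subst hd; rw [h0] at h2; exact h2.le
            · rw [← h1 0 hd, h0]
        rw [shift_iter, add_zero] at this
        exact le_antisymm (Fin.le_last _) this
      obtain ⟨i, hi⟩ := hv2 k hvk
      exact ⟨i, x, hx, lexLe_trans (sub_le _ hle) hi⟩
    · push Not at hz
      obtain ⟨i, hi, hm⟩ := hz
      have hm' : ∃ m, 1 ≤ m ∧ m ≤ n 0 ∧ s (i + m) ≠ 0 := hm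
      classical
      obtain ⟨a1, a2, a3⟩ := Nat.find_spec hm'
      refine ⟨i, fun _ => 2, rfl, Or.inr ⟨Nat.find hm', fun j hj => ?_, ?_⟩⟩
      all_goals
        have h0 : subs (fun i => n (i+1)) R (fun _ => 2) 0 = 2 := subs_head (fun i => n (i+1)) R rfl
        have hz : ∀ j, 1 ≤ j → j ≤ n 0 → subs n (R+1) (fun _ => 2) j = 0 := by
          intro j h1 h2
          show sub (n 0) (subs (fun i => n (i+1)) R (fun _ => 2)) j = 0
          apply sub_zero' (j := 0)
          · rw [bpos_zero]; omega
          · rw [bpos_succ, bpos_zero, h0]; simp [blen]; omega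
      · rw [shift_iter]
        rcases Nat.eq_zero_or_pos j with h | h
        · subst h
          rw [add_zero, hi]; exact subs_head n (R+1) rfl
        · rw [hz j h (by omega)]
          by_contra hne
          exact Nat.find_min hm' hj ⟨h, by omega, fun e => hne e.symm⟩
      · rw [hz _ a1 a2, shift_iter]
        exact Fin.pos_iff_ne_zero.2 a3

lemma subs_freq (R : ℕ) : ∀ (n : ℕ → ℕ) (b : ℕ → Fin 3 → ℝ) (_ : Chain n b) (y : Seq3)
    (_ : hasFreq y (b R)), hasFreq (subs n R y) (b 0) := by
  induction R with
  | zero => intro n b hb y hy; exact hy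
  | succ R ih =>
    intro n b hb y hy
    exact freq_sub (ih _ _ hb.tail y hy) (hb 0).1.1 (hb 0).2

lemma chain_infimax {n : ℕ → ℕ} {b : ℕ → Fin 3 → ℝ} (hb : Chain n b) : IsInfimax (b 0) (Lim n) := by
  refine ⟨?_, Lim_max n, ?_, ?_⟩
  · obtain ⟨w, h1, h2⟩ := exists_max_s17 (hb 0).1
    exact ⟨w, h1, h2⟩
  · rintro w ⟨hw, hf⟩
    refine lexLe_lim fun m => ?_
    obtain ⟨k, x, hx, hle⟩ := lower_claim (2*m) n b hb w hf
    refine ⟨subs n (2*m) x, w, lexLe_trans hle (hw.2 k), fun i hi => ?_, fun _ _ => rfl⟩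
    exact Lim_agree hx le_rfl i (by omega)
  · intro z hz
    refine lexLe_lim fun m => ?_
    obtain ⟨y, hy, hyf⟩ := exists_max_s17 (hb (2*m)).1
    refine ⟨z, subs n (2*m) y, hz _ ⟨subs_max n _ hy, subs_freq _ n b hb y hyf⟩, fun _ _ => rfl,
      fun i hi => Lim_agree hy.1 le_rfl i (by omega)⟩

lemma infimax_unique {α : Fin 3 → ℝ} {I J : Seq3} (hI : IsInfimax α I) (hJ : IsInfimax α J) :
    I = J :=
  lexLe_antisymm (hJ.2.2.2 I hI.2.2.1) (hI.2.2.2 J hJ.2.2.1)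

lemma K_exists {a : Fin 3 → ℝ} (ha : a ∈ Delta') : ∃ n : ℕ, ∃ b ∈ Delta', KRel n a b := by
  obtain ⟨hd, h2⟩ := ha
  have p0 := hd.1 0
  have p1 := hd.1 1
  have hs := hd.2
  have hpos : 0 < 1 - a 0 := by linarith
  have f1 := Nat.floor_le (div_nonneg p0 h2.le)
  have f2 := Nat.lt_floor_add_one (a 0 / a 2)
  rw [le_div_iff₀ h2] at f1
  rw [div_lt_iff₀ h2] at f2
  set n := ⌊a 0 / a 2⌋₊
  refine ⟨n, ![a 1 / (1 - a 0), (a 0 - n * a 2) / (1 - a 0), ((n+1) * a 2 - a 0)/(1 - a 0)],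
    ⟨⟨?_, ?_⟩, ?_⟩, ?_⟩
  · intro i
    fin_cases i
    · exact div_nonneg p1 hpos.le
    · exact div_nonneg (by linarith) hpos.le
    · exact div_nonneg (by linarith) hpos.le
  · simp; field_simp; linarith
  · simp; apply div_pos _ hpos; linarith
  · refine ⟨by linarith, ?_, ?_, ?_⟩ <;> simp <;> field_simp

lemma chain_exists {α : Fin 3 → ℝ} (hα : α ∈ Delta') : ∃ n b, Chain n b ∧ b 0 = α := by
  have hex : ∀ a : Fin 3 → ℝ, ∃ n : ℕ, ∃ b : Fin 3 → ℝ, a ∈ Delta' → b ∈ Delta' ∧ KRel n a b := by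
    intro a
    by_cases ha : a ∈ Delta'
    · obtain ⟨n, b, h1, h2⟩ := K_exists ha
      exact ⟨n, b, fun _ => ⟨h1, h2⟩⟩
    · exact ⟨0, 0, fun h => absurd h ha⟩
  choose N K hK using hex
  let b : ℕ → Fin 3 → ℝ := fun r => K^[r] α
  have hb : ∀ r, b r ∈ Delta' := by
    intro r
    induction r with
    | zero => exact hα
    | succ r ih => simp only [b, Function.iterate_succ_apply'] at *; exact (hK _ ih).1
  refine ⟨fun r => N (b r), b, fun r => ⟨hb r, ?_⟩, rfl⟩
  have := (hK _ (hb r)).2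
  simpa only [b, Function.iterate_succ_apply'] using this

def Reg (n : ℕ → ℕ) (a : Fin 3 → ℝ) : Prop := ∀ b, Chain n b → b 0 = a

lemma Reg.tail {n : ℕ → ℕ} {b : ℕ → Fin 3 → ℝ} (hb : Chain n b) (h : Reg n (b 0)) :
    Reg (fun i => n (i+1)) (b 1) := by
  intro c hc
  obtain ⟨⟨hcd, hc2⟩, -⟩ := hc 0
  have q0 := hcd.1 0
  have q1 := hcd.1 1
  have hs := hcd.2
  set S : ℝ := c 0 0 + (c 0 1 + c 0 2) + ((n 0+1) * c 0 1 + n 0 * c 0 2) with hS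
  have hSpos : 0 < S := by positivity
  let a : Fin 3 → ℝ := ![((n 0+1) * c 0 1 + n 0 * c 0 2)/S, c 0 0 / S, (c 0 1 + c 0 2)/S]
  have ha0 : a 0 = ((n 0+1) * c 0 1 + n 0 * c 0 2)/S := rfl
  have ha1 : a 1 = c 0 0 / S := rfl
  have ha2 : a 2 = (c 0 1 + c 0 2)/S := rfl
  have h1a : 1 - a 0 = 1 / S := by
    rw [ha0]; field_simp; rw [hS]; linarith
  have hKa : KRel (n 0) a (c 0) := by
    refine ⟨?_, ?_, ?_, ?_⟩
    · have : 0 < 1 - a 0 := by rw [h1a]; positivity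
      linarith
    · rw [h1a, ha1]; ring
    · rw [h1a, ha0, ha2]; field_simp; ring
    · rw [h1a, ha0, ha2]; field_simp; ring
  have hch : Chain n (fun r => Nat.casesOn r a c) := by
    intro r
    cases r with
    | zero =>
      refine ⟨⟨⟨?_, ?_⟩, ?_⟩, hKa⟩
      · intro i
        fin_cases i
        · show 0 ≤ a 0; rw [ha0]; positivity
        · show 0 ≤ a 1; rw [ha1]; positivity
        · show 0 ≤ a 2; rw [ha2]; positivity
      · show a 0 + a 1 + a 2 = 1
        rw [ha0, ha1, ha2]; field_simp; rw [hS]; ring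
      · show 0 < a 2; rw [ha2]; positivity
    | succ r => exact hc r
  have he : a = b 0 := h _ hch
  have hKb := (hb 0).2
  rw [← he] at hKb
  obtain ⟨k0, k1, k2, k3⟩ := hKb
  obtain ⟨l0, l1, l2, l3⟩ := hKa
  have hne : 1 - a 0 ≠ 0 := by linarith
  funext i
  apply mul_left_cancel₀ hne
  fin_cases i
  · exact l1.trans k1.symm
  · exact l2.trans k2.symm
  · exact l3.trans k3.symm


lemma rot_chain {n : ℕ → ℕ} {k r : ℕ → ℕ} {v : Fin 3 → ℝ} (h : RotLim (Lim n) k r v) :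
    ∃ b, Chain n b ∧ b 0 = v := by
  let Q : ℕ → (Fin 3 → ℝ) → Prop := fun R v => ∃ k r, RotLim (Lim (fun i => n (R + i))) k r v
  have hex : ∀ R v, ∃ u, Q R v → Q (R+1) u ∧ KRel (n R) v u := by
    intro R v
    by_cases hq : Q R v
    · obtain ⟨k, r, hr⟩ := hq
      rw [Lim_sub] at hr
      obtain ⟨k', r', u, h1, h2⟩ := rot_sub hr
      refine ⟨u, fun _ => ⟨⟨k', r', ?_⟩, h2⟩⟩
      have e : (fun i => n (R + 1 + i)) = fun i => n (R + (i+1)) := by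
        funext i; congr 1; omega
      rw [e]; exact h1
    · exact ⟨0, fun h => absurd h hq⟩
  choose U hU using hex
  let b : ℕ → Fin 3 → ℝ := fun R => Nat.rec v (fun R w => U R w) R
  have hb : ∀ R, Q R (b R) := by
    intro R
    induction R with
    | zero => exact ⟨k, r, by simpa [b] using h⟩
    | succ R ih => exact (hU R _ ih).1
  have hK : ∀ R, KRel (n R) (b R) (b (R+1)) := fun R => (hU R _ (hb R)).2
  have hD : ∀ R, b R ∈ Delta := fun R => by
    obtain ⟨k, r, h⟩ := hb R
    exact rot_delta h
  refine ⟨b, fun R => ⟨⟨hD R, ?_⟩, hK R⟩, rfl⟩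
  by_contra hcon
  have h0 : b R 2 = 0 := le_antisymm (not_lt.1 hcon) ((hD R).1 2)
  obtain ⟨k0, k1, k2, k3⟩ := hK R
  have l0 := (hK (R+1)).1
  have d0 := (hD R).1 0
  have d2 := (hD (R+1)).1 2
  have ds := (hD (R+1)).2
  rw [h0] at k2 k3
  have hp : 0 < 1 - b R 0 := by linarith
  have e0 : b R 0 = 0 := by nlinarith
  rw [e0] at k2 k3
  linarith

def UF (s : Seq3) (v : Fin 3 → ℝ) : Prop :=
  ∀ ε > 0, ∃ N0 : ℕ, ∀ k, ∀ N ≥ N0, ∀ i, |C s i (k + N) - C s i k - v i * N| ≤ ε * N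

lemma uf_of_rot {s : Seq3} {v : Fin 3 → ℝ} (h : ∀ k r v', RotLim s k r v' → v' = v) : UF s v := by
  by_contra hcon
  unfold UF at hcon
  push Not at hcon
  obtain ⟨ε, hε, hcon⟩ := hcon
  choose k N hN i hi using fun j : ℕ => hcon (j+1)
  let w : ℕ → Fin 3 → ℝ := fun j e => (C s e (k j + N j) - C s e (k j)) / (N j : ℝ)
  have hNpos : ∀ j, (0:ℝ) < N j := fun j => by
    have := hN j
    exact_mod_cast (by omega : 0 < N j)
  have hw : ∀ j, w j ∈ Set.Icc (0 : Fin 3 → ℝ) 1 := by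
    intro j
    refine ⟨fun e => ?_, fun e => ?_⟩
    · have := C_mono s e (Nat.le_add_right (k j) (N j))
      exact div_nonneg (by linarith) (hNpos j).le
    · exact (div_le_one (hNpos j)).2 (C_lip s e (k j) (N j))
  obtain ⟨v', -, φ, hφ, ht⟩ := isCompact_Icc.tendsto_subseq hw
  have hr : RotLim s (k ∘ φ) (N ∘ φ) v' := by
    refine ⟨?_, fun e => (tendsto_pi_nhds.1 ht) e⟩
    refine tendsto_atTop_mono (fun j => ?_) tendsto_id
    have h1 := hN (φ j)
    have h2 : j ≤ φ j := hφ.le_apply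
    simp only [id, Function.comp]; omega
  have e := h _ _ _ hr
  subst e
  have hev : ∀ᶠ j in atTop, ∀ e, |w (φ j) e - v' e| < ε := by
    rw [eventually_all]
    intro e
    have := (tendsto_pi_nhds.1 ht) e
    have := Metric.tendsto_nhds.1 this ε hε
    simpa [Real.dist_eq] using this
  obtain ⟨j, hj⟩ := hev.exists
  have h1 := hj (i (φ j))
  have h2 := hi (φ j)
  have h3 := hNpos (φ j)
  have : C s (i (φ j)) (k (φ j) + N (φ j)) - C s (i (φ j)) (k (φ j)) - v' (i (φ j)) * N (φ j)
      = (w (φ j) (i (φ j)) - v' (i (φ j))) * N (φ j) := by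
    simp only [w]; field_simp
  rw [this, abs_mul, abs_of_pos h3] at h2
  nlinarith

lemma lim_uf {n : ℕ → ℕ} {b : ℕ → Fin 3 → ℝ} (h : Reg n (b 0)) : UF (Lim n) (b 0) := by
  apply uf_of_rot
  intro k r v' hr
  obtain ⟨c, hc, e⟩ := rot_chain hr
  rw [← e]; exact h c hc

lemma uf_freq {s : Seq3} {v : Fin 3 → ℝ} (h : UF s v) : hasFreq s v := by
  rw [hasFreq_C]
  intro i
  rw [Metric.tendsto_atTop]
  intro ε hε
  obtain ⟨N0, hN0⟩ := h (ε/2) (by linarith)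
  refine ⟨N0 + 1, fun N hN => ?_⟩
  have h1 := hN0 0 N (by omega) i
  have hp : (0:ℝ) < N := by exact_mod_cast (by omega : 0 < N)
  rw [zero_add, C_zero, sub_zero] at h1
  rw [Real.dist_eq, show C s i N / N - v i = (C s i N - v i * N) / N by field_simp,
    abs_div, abs_of_pos hp, div_lt_iff₀ hp]
  nlinarith

lemma Reg.iter {n : ℕ → ℕ} {b : ℕ → Fin 3 → ℝ} (hb : Chain n b) (h : Reg n (b 0)) (R : ℕ) :
    Reg (fun i => n (R + i)) (b R) := by
  induction R with
  | zero => simpa using h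
  | succ R ih =>
    have hc : Chain (fun i => n (R + i)) (fun i => b (R + i)) := fun r => hb (R + r)
    have := Reg.tail hc ih
    have e : (fun i => n (R + 1 + i)) = fun i => n (R + (i+1)) := by
      funext i; congr 1; omega
    rw [e]; exact this

lemma lim_uf_iter {n : ℕ → ℕ} {b : ℕ → Fin 3 → ℝ} (hb : Chain n b) (h : Reg n (b 0)) (R : ℕ) :
    UF (Lim (fun i => n (R + i))) (b R) :=
  lim_uf (b := fun i => b (R + i)) (Reg.iter hb h R)


lemma unif_cyl {f : Seq3 → ℝ} (hf : Continuous f) {ε : ℝ} (hε : 0 < ε) :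
    ∃ m : ℕ, ∀ x y : Seq3, (∀ i < m, x i = y i) → |f x - f y| ≤ ε := by
  by_contra hcon
  push Not at hcon
  choose x y h1 h2 using hcon
  obtain ⟨z, φ, hφ, ht⟩ := CompactSpace.tendsto_subseq x
  have hy : Tendsto (y ∘ φ) atTop (𝓝 z) := by
    rw [tendsto_pi_nhds] at ht ⊢
    intro i
    refine (ht i).congr' ?_
    filter_upwards [eventually_gt_atTop i] with j hj
    have : j ≤ φ j := hφ.le_apply
    exact h1 (φ j) i (by omega)
  have h3 : Tendsto (fun j => |f (x (φ j)) - f (y (φ j))|) atTop (𝓝 |f z - f z|) :=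
    (((hf.tendsto z).comp ht).sub ((hf.tendsto z).comp hy)).abs
  rw [sub_self, abs_zero] at h3
  obtain ⟨j, hj⟩ := ((tendsto_order.1 h3).2 ε hε).exists
  linarith [h2 (φ j)]

lemma bdd_of_cont {f : Seq3 → ℝ} (hf : Continuous f) : ∃ B : ℝ, 0 ≤ B ∧ ∀ x, |f x| ≤ B := by
  obtain ⟨B, hB⟩ := isCompact_univ.exists_bound_of_continuousOn (f := f) hf.continuousOn
  exact ⟨max B 0, le_max_right _ _, fun x => (hB x trivial).trans (le_max_left _ _)⟩

noncomputable def Asum (f : Seq3 → ℝ) (s : Seq3) (N : ℕ) : ℝ :=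
  ∑ i ∈ Finset.range N, f (shift^[i] s)

lemma Asum_add (f : Seq3 → ℝ) (s : Seq3) (k N : ℕ) :
    Asum f s (k + N) - Asum f s k = ∑ i ∈ Finset.range N, f (shift^[i] (shift^[k] s)) := by
  unfold Asum
  rw [Finset.sum_range_add, add_sub_cancel_left]
  apply Finset.sum_congr rfl
  intro i _
  rw [← Function.iterate_add_apply, add_comm]

lemma Asum_lip {f : Seq3 → ℝ} {B : ℝ} (hB : ∀ x, |f x| ≤ B) (s : Seq3) {a b : ℕ} (h : a ≤ b) :
    |Asum f s b - Asum f s a| ≤ B * ((b:ℝ) - a) := by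
  obtain ⟨r, rfl⟩ := Nat.exists_eq_add_of_le h
  rw [Asum_add]
  refine (Finset.abs_sum_le_sum_abs _ _).trans ?_
  refine (Finset.sum_le_sum fun i _ => hB _).trans ?_
  simp [mul_comm]

lemma block_diff {f : Seq3 → ℝ} {B ε : ℝ} {m : ℕ} (hB : ∀ x, |f x| ≤ B) (hB0 : 0 ≤ B) (hε : 0 ≤ ε)
    (hm : ∀ x y : Seq3, (∀ i < m, x i = y i) → |f x - f y| ≤ ε) {x y : Seq3} {l : ℕ}
    (hxy : ∀ i < l, x i = y i) : |Asum f x l - Asum f y l| ≤ ε * l + 2 * B * m := by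
  have key : ∀ r ≤ l, |Asum f x r - Asum f y r| ≤ ε * r + 2 * B * ((r - (l - m) : ℕ) : ℝ) := by
    intro r
    induction r with
    | zero => intro _; simp [Asum]
    | succ r ih =>
      intro hr
      have h1 := ih (by omega)
      have e : Asum f x (r+1) - Asum f y (r+1) =
          (Asum f x r - Asum f y r) + (f (shift^[r] x) - f (shift^[r] y)) := by
        simp only [Asum, Finset.sum_range_succ]; ring
      rw [e]
      refine (abs_add_le _ _).trans ?_
      by_cases hc : r + m + 1 ≤ l
      · have h2 := hm (shift^[r] x) (shift^[r] y) (fun i hi => by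
          rw [shift_iter, shift_iter]; exact hxy _ (by omega))
        have e1 : r + 1 - (l - m) = 0 := by omega
        have e2 : r - (l - m) = 0 := by omega
        rw [e1]; rw [e2] at h1
        push_cast at *
        linarith
      · have h2 : |f (shift^[r] x) - f (shift^[r] y)| ≤ 2 * B := by
          have a1 := abs_le.1 (hB (shift^[r] x))
          have a2 := abs_le.1 (hB (shift^[r] y))
          rw [abs_le]; constructor <;> linarith
        have e1 : r + 1 - (l - m) = r - (l - m) + 1 := by omega
        rw [e1]; push_cast
        nlinarith
  refine (key l le_rfl).trans ?_
  have : ((l - (l - m) : ℕ) : ℝ) ≤ m := by exact_mod_cast (by omega : l - (l - m) ≤ m)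
  nlinarith

lemma block_index {p : ℕ → ℕ} (hp0 : p 0 = 0) (hp : StrictMono p) (k : ℕ) :
    ∃ a, p a ≤ k ∧ k < p (a+1) := by
  induction k with
  | zero => exact ⟨0, by omega, by have := hp (Nat.zero_lt_one); simpa [hp0] using this⟩
  | succ k ih =>
    obtain ⟨a, h1, h2⟩ := ih
    by_cases h : k + 1 < p (a+1)
    · exact ⟨a, by omega, h⟩
    · exact ⟨a+1, by omega, by have := hp (show a + 1 < a + 1 + 1 by omega); omega⟩

set_option maxHeartbeats 1000000 in
lemma blocks_avg {f : Seq3 → ℝ} {B η : ℝ} (hB : ∀ x, |f x| ≤ B) (hB0 : 0 ≤ B) (hη : 0 < η)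
    {s τ : Seq3} {u : Fin 3 → ℝ} (hU : UF τ u) {l : Fin 3 → ℕ} (hl : ∀ d, 1 ≤ l d)
    {p : ℕ → ℕ} (hp0 : p 0 = 0) (hps : ∀ j, p (j+1) = p j + l (τ j))
    (hg : ∀ i j, τ i = τ j → |(Asum f s (p (i+1)) - Asum f s (p i)) -
      (Asum f s (p (j+1)) - Asum f s (p j))| ≤ η * l (τ i)) :
    ∃ c : ℝ, ∃ N0 : ℕ, ∀ k, ∀ N ≥ N0,
      |(∑ i ∈ Finset.range N, f (shift^[i] (shift^[k] s))) - c * N| ≤ 3 * η * N := by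
  classical
  let g : ℕ → ℝ := fun j => Asum f s (p (j+1)) - Asum f s (p j)
  have hGex : ∀ d : Fin 3, ∃ G : ℝ, ∀ j, τ j = d → |g j - G| ≤ η * l d := by
    intro d
    by_cases h : ∃ j, τ j = d
    · obtain ⟨j0, h0⟩ := h
      refine ⟨g j0, fun j hj => ?_⟩
      have := hg j j0 (hj.trans h0.symm)
      rwa [hj] at this
    · exact ⟨0, fun j hj => absurd ⟨j, hj⟩ h⟩
  choose G hG using hGex
  have hu := freq_delta (uf_freq hU)
  have hpm : StrictMono p := strictMono_nat_of_lt_succ fun j => by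
    rw [hps]; have := hl (τ j); omega
  have hpC : ∀ b, (p b : ℝ) = l 0 * C τ 0 b + l 1 * C τ 1 b + l 2 * C τ 2 b := by
    intro b
    induction b with
    | zero => simp [hp0, C_zero]
    | succ b ih =>
      rw [hps, C_succ, C_succ, C_succ]; push_cast; rw [ih]
      rcases fin3_cases (τ b) with h | h | h <;> rw [h] <;> simp <;> ring
  let X : ℕ → ℝ := fun b => G 0 * C τ 0 b + G 1 * C τ 1 b + G 2 * C τ 2 b
  have hX : ∀ b, X (b+1) = X b + G (τ b) := by
    intro b
    simp only [X, C_succ]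
    rcases fin3_cases (τ b) with h | h | h <;> rw [h] <;> simp <;> ring
  have hsum : ∀ a r, |(Asum f s (p (a+r)) - Asum f s (p a)) - (X (a+r) - X a)| ≤
      η * ((p (a + r) : ℝ) - p a) := by
    intro a r
    induction r with
    | zero => simp
    | succ r ih =>
      have h1 := hG (τ (a+r)) (a+r) rfl
      have e : (Asum f s (p (a+(r+1))) - Asum f s (p a)) - (X (a+(r+1)) - X a) =
        ((Asum f s (p (a+r)) - Asum f s (p a)) - (X (a+r) - X a)) + (g (a+r) - G (τ (a+r))) := by
        simp only [← add_assoc, hX, g]; ring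
      rw [e]
      refine (abs_add_le _ _).trans ?_
      rw [← add_assoc, hps]; push_cast
      linarith
  set L : ℕ := l 0 + l 1 + l 2 with hL
  have hlL : ∀ d, l d ≤ L := by
    intro d
    rcases fin3_cases d with h | h | h <;> rw [h] <;> omega
  set Λ : ℝ := u 0 * l 0 + u 1 * l 1 + u 2 * l 2 with hΛ
  have hΛ1 : 1 ≤ Λ := by
    have a0 : (1:ℝ) ≤ l 0 := by exact_mod_cast hl 0
    have a1 : (1:ℝ) ≤ l 1 := by exact_mod_cast hl 1
    have a2 : (1:ℝ) ≤ l 2 := by exact_mod_cast hl 2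
    have := hu.2
    have b0 := hu.1 0
    have b1 := hu.1 1
    have b2 := hu.1 2
    nlinarith
  set c : ℝ := (u 0 * G 0 + u 1 * G 1 + u 2 * G 2) / Λ with hc
  have hcΛ : c * Λ = u 0 * G 0 + u 1 * G 1 + u 2 * G 2 := by
    rw [hc]; field_simp
  set D : ℝ := |G 0 - c * l 0| + |G 1 - c * l 1| + |G 2 - c * l 2| + 1 with hD
  have hD0 : 0 < D := by positivity
  obtain ⟨N1, hN1⟩ := hU (η / D) (by positivity)
  have hXc : ∀ a r, N1 ≤ r → |(X (a+r) - X a) - c * ((p (a+r) : ℝ) - p a)| ≤ η * r := by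
    intro a r hr
    have h0 := hN1 a r hr 0
    have h1 := hN1 a r hr 1
    have h2 := hN1 a r hr 2
    have e : (X (a+r) - X a) - c * ((p (a+r) : ℝ) - p a) =
        (G 0 - c * l 0) * (C τ 0 (a+r) - C τ 0 a - u 0 * r) +
        (G 1 - c * l 1) * (C τ 1 (a+r) - C τ 1 a - u 1 * r) +
        (G 2 - c * l 2) * (C τ 2 (a+r) - C τ 2 a - u 2 * r) := by
      rw [hpC, hpC]
      simp only [X]
      linear_combination (-(r:ℝ)) * hcΛ + c * r * hΛ
    rw [e]
    have hη' : η * r = D * (η / D * r) := by field_simp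
    have hq : 0 ≤ η / D * r := by positivity
    rw [hη']
    refine (abs_add_three _ _ _).trans ?_
    rw [abs_mul, abs_mul, abs_mul]
    have i0 := mul_le_mul_of_nonneg_left h0 (abs_nonneg (G 0 - c * l 0))
    have i1 := mul_le_mul_of_nonneg_left h1 (abs_nonneg (G 1 - c * l 1))
    have i2 := mul_le_mul_of_nonneg_left h2 (abs_nonneg (G 2 - c * l 2))
    rw [hD]
    linarith
  obtain ⟨N2, hN2⟩ := exists_nat_gt ((2 * η * L + 2 * B * L + |c| * L) / η)
  rw [div_lt_iff₀ hη] at hN2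
  refine ⟨c, max N2 ((N1 + 1) * L), fun k N hN => ?_⟩
  obtain ⟨a, ha1, ha2⟩ := block_index hp0 hpm k
  obtain ⟨b, hb1, hb2⟩ := block_index hp0 hpm (k+N)
  have hab : a ≤ b := by
    have := hpm.lt_iff_lt.1 (show p a < p (b+1) by omega)
    omega
  obtain ⟨r, rfl⟩ := Nat.exists_eq_add_of_le hab
  have ha3 : k < p a + L := by have := hlL (τ a); rw [hps] at ha2; omega
  have hb3 : k + N < p (a+r) + L := by have := hlL (τ (a+r)); rw [hps] at hb2; omega
  have hrle : ∀ r, p a + r ≤ p (a + r) ∧ p (a+r) ≤ p a + r * L := by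
    intro r
    induction r with
    | zero => simp
    | succ r ih =>
      rw [show a + (r + 1) = a + r + 1 from rfl, hps]
      have h1 := hl (τ (a+r))
      have h2 := hlL (τ (a+r))
      constructor
      · omega
      · rw [add_mul]; omega
  obtain ⟨r1, r2⟩ := hrle r
  have hr : N1 ≤ r := by
    by_contra hlt
    push Not at hlt
    have h1 : N ≥ (N1+1) * L := le_trans (le_max_right _ _) hN
    have h2 : r * L + L ≤ N1 * L := by
      have : (r + 1) * L ≤ N1 * L := Nat.mul_le_mul_right _ hlt
      rw [add_mul] at this; omega
    rw [add_mul] at h1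
    omega
  have hN2' : (N2:ℝ) ≤ N := by exact_mod_cast le_trans (le_max_left _ _) hN
  have j1 := hsum a r
  have j2 := hXc a r hr
  have j3 := Asum_lip hB s ha1
  have j4 := Asum_lip hB s hb1
  rw [← Asum_add]
  have c1 : (p a : ℝ) ≤ k := by exact_mod_cast ha1
  have c2 : (k : ℝ) ≤ p a + L := by exact_mod_cast ha3.le
  have c3 : (p (a+r) : ℝ) ≤ k + N := by exact_mod_cast hb1
  have c4 : (k + N : ℝ) ≤ p (a+r) + L := by exact_mod_cast hb3.le
  have c5 : (p a + r : ℝ) ≤ p (a+r) := by exact_mod_cast r1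
  push_cast at j4
  have j3' : |Asum f s k - Asum f s (p a)| ≤ B * L := j3.trans (by gcongr; linarith)
  have j4' : |Asum f s (k+N) - Asum f s (p (a+r))| ≤ B * L := j4.trans (by gcongr; linarith)
  have j5 : |c * ((p (a+r) : ℝ) - p a - N)| ≤ |c| * L := by
    rw [abs_mul]; gcongr; rw [abs_le]; constructor <;> linarith
  have e1 : η * ((p (a + r) : ℝ) - p a) ≤ η * (N + L) := by gcongr; linarith
  have e2 : η * r ≤ η * (N + L) := by gcongr; linarith
  have hNη : (N2:ℝ) * η ≤ N * η := by gcongr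
  clear hXc hsum hX hpC hG hN1 hg hB hU hps hcΛ
  obtain ⟨x1, y1⟩ := abs_le.1 j1
  obtain ⟨x2, y2⟩ := abs_le.1 j2
  obtain ⟨x3, y3⟩ := abs_le.1 j3'
  obtain ⟨x4, y4⟩ := abs_le.1 j4'
  obtain ⟨x5, y5⟩ := abs_le.1 j5
  rw [abs_le]
  constructor <;> linarith

lemma single_const {F : ℕ → ℕ → ℝ}
    (h : ∀ e > 0, ∃ c : ℝ, ∃ N0 : ℕ, ∀ k, ∀ N ≥ N0, |F k N - c * N| ≤ e * N) :
    ∃ c : ℝ, ∀ e > 0, ∃ N0 : ℕ, ∀ k, ∀ N ≥ N0, |F k N - c * N| ≤ e * N := by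
  have hdiv : ∀ e > 0, ∃ c : ℝ, ∃ N0 : ℕ, (∀ k, ∀ N ≥ N0, |F k N - c * N| ≤ e * N) ∧
      ∀ N ≥ N0, |F 0 N / N - c| ≤ e := by
    intro e he
    obtain ⟨c, N0, h1⟩ := h e he
    refine ⟨c, N0 + 1, fun k N hN => h1 k N (by omega), fun N hN => ?_⟩
    have hp : (0:ℝ) < N := by exact_mod_cast (by omega : 0 < N)
    rw [show F 0 N / N - c = (F 0 N - c * N) / N by field_simp, abs_div, abs_of_pos hp,
      div_le_iff₀ hp]
    exact h1 0 N (by omega)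
  have hC : CauchySeq (fun N : ℕ => F 0 N / N) := by
    rw [Metric.cauchySeq_iff']
    intro e he
    obtain ⟨c, N0, -, h1⟩ := hdiv (e/3) (by linarith)
    refine ⟨N0, fun N hN => ?_⟩
    have a1 := h1 N hN
    have a2 := h1 N0 le_rfl
    rw [Real.dist_eq, abs_lt]
    rw [abs_le] at a1 a2
    constructor <;> linarith
  obtain ⟨c, hc⟩ := cauchySeq_tendsto_of_complete hC
  refine ⟨c, fun e he => ?_⟩
  obtain ⟨c', N0, h1, h2⟩ := hdiv (e/2) (by linarith)
  have hcc : |c - c'| ≤ e/2 := by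
    refine le_of_tendsto (hc.sub_const c').abs ?_
    filter_upwards [eventually_ge_atTop N0] with N hN using h2 N hN
  refine ⟨N0, fun k N hN => ?_⟩
  have a1 := h1 k N hN
  have hp : (0:ℝ) ≤ N := by positivity
  rw [abs_le] at *
  constructor <;> nlinarith


def posn : (ℕ → ℕ) → ℕ → Seq3 → ℕ → ℕ
  | _, 0, _, a => a
  | n, R+1, x, a => bpos (n 0) (subs (fun i => n (i+1)) R x) (posn (fun i => n (i+1)) R x a)

lemma posn_congr (R : ℕ) : ∀ (n : ℕ → ℕ) {x y : Seq3} {a : ℕ} (_ : ∀ i < a, x i = y i),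
    posn n R x a = posn n R y a ∧ ∀ i < posn n R x a, subs n R x i = subs n R y i := by
  induction R with
  | zero => intro n x y a h; exact ⟨rfl, h⟩
  | succ R ih =>
    intro n x y a h
    obtain ⟨h1, h2⟩ := ih (fun i => n (i+1)) h
    refine ⟨?_, sub_congr h2⟩
    show bpos _ _ _ = bpos _ _ _
    rw [bpos_congr h2 le_rfl, h1]

lemma posn_shift (R : ℕ) : ∀ (n : ℕ → ℕ) (x : Seq3) (a : ℕ),
    shift^[posn n R x a] (subs n R x) = subs n R (shift^[a] x) := by
  induction R with
  | zero => intro n x a; rfl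
  | succ R ih =>
    intro n x a
    show shift^[bpos _ _ _] (sub _ _) = sub _ _
    rw [sub_shift, ih]

lemma posn_add (R : ℕ) : ∀ (n : ℕ → ℕ) (x : Seq3) (a b : ℕ),
    posn n R x (a + b) = posn n R x a + posn n R (shift^[a] x) b := by
  induction R with
  | zero => intro n x a b; rfl
  | succ R ih =>
    intro n x a b
    show bpos _ _ _ = bpos _ _ _ + bpos _ _ _
    rw [ih, ← bpos_shift, posn_shift]

lemma posn_zero (R : ℕ) : ∀ (n : ℕ → ℕ) (x : Seq3), posn n R x 0 = 0 := by
  induction R with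
  | zero => intro n x; rfl
  | succ R ih =>
    intro n x
    show bpos _ _ _ = 0
    rw [ih, bpos_zero]

lemma subs_inner (R : ℕ) : ∀ (n : ℕ → ℕ) (x : Seq3), subs n (R+1) x = subs n R (sub (n R) x) := by
  induction R with
  | zero => intro n x; rfl
  | succ R ih =>
    intro n x
    show sub (n 0) (subs (fun i => n (i+1)) (R+1) x) = sub (n 0) (subs (fun i => n (i+1)) R _)
    rw [ih]

lemma posn_inner (R : ℕ) : ∀ (n : ℕ → ℕ) (x : Seq3) (a : ℕ),
    posn n (R+1) x a = posn n R (sub (n R) x) (bpos (n R) x a) := by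
  induction R with
  | zero => intro n x a; rfl
  | succ R ih =>
    intro n x a
    show bpos (n 0) (subs (fun i => n (i+1)) (R+1) x) (posn (fun i => n (i+1)) (R+1) x a) =
      bpos (n 0) (subs (fun i => n (i+1)) R _) (posn (fun i => n (i+1)) R _ _)
    rw [ih, subs_inner]

lemma posn_ge {n : ℕ → ℕ} {R K : ℕ} (h : ∀ x, K ≤ posn n R x 1) (x : Seq3) (b : ℕ) :
    b * K ≤ posn n R x b := by
  induction b with
  | zero => simp
  | succ b ih =>
    rw [posn_add, add_mul]
    have := h (shift^[b] x)
    omega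

lemma bpos_one (n : ℕ) (x : Seq3) : bpos n x 1 = blen n (x 0) := by
  have := bpos_succ n x 0
  rwa [bpos_zero, zero_add, zero_add] at this

lemma grow_step {n : ℕ → ℕ} {R K : ℕ} (h : ∀ x, K ≤ posn n R x 1) :
    ∀ x, K ≤ posn n (R+1) x 1 := by
  intro x
  rw [posn_inner, bpos_one]
  have h1 := posn_ge h (sub (n R) x) (blen (n R) (x 0))
  have h2 := blen_pos (n R) (x 0)
  nlinarith

lemma grow_mono {n : ℕ → ℕ} {R K : ℕ} (h : ∀ x, K ≤ posn n R x 1) (R' : ℕ) :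
    ∀ x, K ≤ posn n (R + R') x 1 := by
  induction R' with
  | zero => exact h
  | succ R' ih => exact grow_step ih

lemma grow_two {n : ℕ → ℕ} {R K : ℕ} (h : ∀ x, K ≤ posn n R x 1) (hn : n R ≠ 0) :
    ∀ x, 2 * K ≤ posn n (R+2) x 1 := by
  have h1 : ∀ x : Seq3, x 0 ≠ 0 → 2 * K ≤ posn n (R+1) x 1 := by
    intro x hx
    rw [posn_inner, bpos_one]
    have h1 := posn_ge h (sub (n R) x) (blen (n R) (x 0))
    have h2 : 2 ≤ blen (n R) (x 0) := by
      unfold blen; rw [if_neg hx]; split_ifs <;> omega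
    nlinarith
  intro x
  show 2 * K ≤ posn n (R+1+1) x 1
  rw [posn_inner, bpos_one]
  obtain ⟨q, hq⟩ := Nat.exists_eq_add_of_le (blen_pos (n (R+1)) (x 0))
  rw [hq, posn_add]
  have h3 := h1 (sub (n (R+1)) x) (by
    have := sub_bpos_ne (n (R+1)) x 0
    rwa [bpos_zero] at this)
  omega

lemma grow {n : ℕ → ℕ} (hn : ∀ R, ∃ r ≥ R, n r ≠ 0) (M : ℕ) : ∃ R, ∀ x, M ≤ posn n R x 1 := by
  have : ∀ M : ℕ, ∃ R, ∀ x, M + 1 ≤ posn n R x 1 := by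
    intro M
    induction M with
    | zero => exact ⟨0, fun x => le_rfl⟩
    | succ M ih =>
      obtain ⟨R, hR⟩ := ih
      obtain ⟨r, hr, hr'⟩ := hn R
      obtain ⟨q, rfl⟩ := Nat.exists_eq_add_of_le hr
      refine ⟨R + q + 2, fun x => ?_⟩
      have := grow_two (grow_mono hR q) hr' x
      omega
  obtain ⟨R, hR⟩ := this M
  exact ⟨R, fun x => by have := hR x; omega⟩

lemma Lim_subs (R : ℕ) : ∀ (n : ℕ → ℕ), Lim n = subs n R (Lim (fun i => n (R + i))) := by
  induction R with
  | zero => intro n; simp [subs]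
  | succ R ih =>
    intro n
    rw [Lim_sub, ih]
    show sub _ (subs _ _ _) = sub _ (subs _ _ _)
    have e : (fun i => n (R + i + 1)) = fun i => n (R + 1 + i) := by
      funext i; congr 1; omega
    simp only [e]

lemma sub_two : sub 0 (fun _ => 2) = fun _ => 2 := by
  have hb : ∀ j, bpos 0 (fun _ => 2) j = j := by
    intro j
    induction j with
    | zero => exact bpos_zero _ _
    | succ j ih => rw [bpos_succ, ih]; simp [blen]
  funext j
  have := sub_bpos 0 (fun _ => 2) j
  rw [hb] at this
  rw [this]; simp

lemma Lim_zero {n : ℕ → ℕ} (h : ∀ r, n r = 0) : Lim n = fun _ => 2 := by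
  have hs : ∀ R n, (∀ r, n r = 0) → subs n R (fun _ => 2) = fun _ => 2 := by
    intro R
    induction R with
    | zero => intro n _; rfl
    | succ R ih =>
      intro n hn
      show sub (n 0) (subs _ R _) = _
      rw [ih _ (fun r => hn (r+1)), hn 0, sub_two]
  funext m
  show subs n (2*m) (fun _ => 2) m = 2
  rw [hs _ _ h]

lemma uf_two : UF (fun _ => 2) ![0, 0, 1] := by
  intro ε hε
  refine ⟨0, fun k N _ i => ?_⟩
  have : C (fun _ => 2) i (k + N) - C (fun _ => 2) i k = (![0,0,1] : Fin 3 → ℝ) i * N := by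
    fin_cases i <;> simp [C]
  rw [this, sub_self, abs_zero]; positivity

lemma lim_unifAvg {n : ℕ → ℕ} {b : ℕ → Fin 3 → ℝ} (hb : Chain n b) (h : Reg n (b 0)) :
    UnifAvg (Lim n) := by
  intro f hf
  apply single_const (F := fun k N => ∑ i ∈ Finset.range N, f (shift^[i] (shift^[k] (Lim n))))
  intro e he
  obtain ⟨B, hB0, hB⟩ := bdd_of_cont hf
  obtain ⟨m, hm⟩ := unif_cyl hf (show 0 < e/6 by linarith)
  obtain ⟨M, hM⟩ := exists_nat_gt (2 * B * m / (e/6))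
  rw [div_lt_iff₀ (by linarith)] at hM
  have he3 : e = 3 * (e/3) := by ring
  -- block differences
  have hdiff : ∀ (x y : Seq3) (l : ℕ), M ≤ l → (∀ i < l, x i = y i) →
      |Asum f x l - Asum f y l| ≤ e/3 * l := by
    intro x y l hl hxy
    refine (block_diff hB hB0 (by linarith) hm hxy).trans ?_
    have : (M:ℝ) ≤ l := by exact_mod_cast hl
    nlinarith
  have hAs : ∀ (s : Seq3) (p l : ℕ), Asum f s (p + l) - Asum f s p = Asum f (shift^[p] s) l :=
    fun s p l => Asum_add f s p l
  by_cases hn : ∀ R, ∃ r ≥ R, n r ≠ 0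
  · obtain ⟨R, hR⟩ := grow hn (M + 1)
    set τ := Lim (fun i => n (R + i)) with hτ
    have hU : UF τ (b R) := lim_uf_iter hb h R
    have hlen : ∀ x : Seq3, posn n R x 1 = posn n R (fun _ => x 0) 1 := fun x =>
      (posn_congr R n (fun i hi => by have : i = 0 := by omega
                                      subst this; rfl)).1
    have hps : ∀ j, posn n R τ (j+1) = posn n R τ j + posn n R (fun _ => τ j) 1 := by
      intro j
      rw [posn_add, hlen (shift^[j] τ), shift_iter, add_zero]
    rw [he3, Lim_subs R n, ← hτ]
    refine blocks_avg hB hB0 (by linarith) hU (l := fun d => posn n R (fun _ => d) 1)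
      (fun d => by have := hR (fun _ => d); omega) (p := posn n R τ) (posn_zero _ _ _) hps ?_
    intro i j hij
    rw [hps, hps, hAs, hAs, posn_shift, posn_shift, ← hij]
    refine hdiff _ _ _ (by have := hR (fun _ => τ i); omega) ?_
    have := (posn_congr R n (x := shift^[i] τ) (y := shift^[j] τ) (a := 1) (fun q hq => by
      have : q = 0 := by omega
      subst this; rw [shift_iter, shift_iter]; exact hij)).2
    rw [hlen, shift_iter, add_zero] at this
    exact this
  · push Not at hn
    obtain ⟨R, hR⟩ := hn
    have hz := Lim_zero (n := fun i => n (R + i)) (fun r => hR _ (by omega))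
    set τ : Seq3 := fun _ => 2 with hτ
    have hsh : ∀ a, shift^[a] τ = τ := fun a => by funext i; rw [shift_iter]
    have hps : ∀ j, posn n R τ ((j+1) * (M+1)) = posn n R τ (j * (M+1)) + posn n R τ (M+1) := by
      intro j
      rw [add_mul, one_mul, posn_add, hsh]
    have hge : M + 1 ≤ posn n R τ (M+1) := by
      have h1 : ∀ x, 1 ≤ posn n R x 1 := by
        have := grow_mono (n := n) (R := 0) (K := 1) (fun x => le_rfl) R
        simpa using this
      simpa using posn_ge h1 τ (M+1)
    rw [he3, Lim_subs R n, hz]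
    refine blocks_avg hB hB0 (by linarith) uf_two (l := fun _ => posn n R τ (M+1))
      (fun d => by omega) (p := fun j => posn n R τ (j * (M+1))) (by simp [posn_zero]) hps ?_
    intro i j _
    rw [hps, hps, hAs, hAs, posn_shift, posn_shift, hsh, hsh]
    exact hdiff _ _ _ (by omega) (fun _ _ => rfl)

/-- If `α ∈ Δ'` is regular (no `α' ≠ α` shares its infimax sequence),
then the shift restricted to `C_α` is uniquely ergodic, every point of `C_α` has digit
frequency `α`, and the unique invariant measure has rotation vector `α`. -/
theorem stmt17 (α : Fin 3 → ℝ) (hα : α ∈ Delta') (Iα : Seq3) (hI : IsInfimax α Iα)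
    (hreg : ∀ α' ∈ Delta', IsInfimax α' Iα → α' = α) :
    (∃ μ : Measure Seq3,
      (IsProbabilityMeasure μ ∧ MeasurePreserving shift μ μ ∧ μ (orbitClosure Iα) = 1 ∧
        (∫ x, kappa x ∂μ) = α) ∧
      ∀ μ' : Measure Seq3, IsProbabilityMeasure μ' → MeasurePreserving shift μ' μ' →
        μ' (orbitClosure Iα) = 1 → μ' = μ) ∧
    ∀ s ∈ orbitClosure Iα, hasFreq s α := by
  obtain ⟨n, b, hb, hb0⟩ := chain_exists hα
  subst hb0
  have e : Iα = Lim n := infimax_unique hI (chain_infimax hb)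
  subst e
  have hR : Reg n (b 0) := fun c hc => hreg _ (hc 0).1 (chain_infimax hc)
  exact main_measure _ _ (uf_freq (lim_uf hR)) (lim_unifAvg hb hR)
end
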